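/- arXiv:2305.00580 — 2 statements merged into one kernel-verified Lean document; each statement's English description precedes it below -/
import Mathlib

section
/- Let Ω ⊂ ℝ^d be compact and convex with non-empty interior, λ > 0, and μ, ν ∈ 𝒫(Ω). If both μ and ν are absolutely continuous with respect to Lebesgue measure, then the unique solution ρ_λ of the WROF problem min_{ρ ∈ 𝒫(Ω)} (1/2)W₂²(μ,ρ) + λ W₁(ρ,ν) is also absolutely continuous with respect to Lebesgue measure. -/
/-!
Let `ρ` be the minimiser.  Glue an optimal `W₂`-plan from `μ` to `ρ` and an optimal `W₁`-plan from
`ρ` to `ν` along `ρ` into a law `π` of triples `(z, x, y)` with `x ∼ μ`, `z ∼ ρ`, `y ∼ ν`.  By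
minimality of `ρ`, `π` minimises the integral of `‖x - z‖² / 2 + λ ‖z - y‖` (`viaCost`) among all
laws of triples in `Ω` with `x ∼ μ` and `y ∼ ν` (`wrof_le_of_triple`).

Exchange inequality (`swap_null`, `viaCost_le_of_mem_support`).  Draw two independent triples from
`π` and let `G` be the event that exchanging the targets `y, y'` and re-routing through the best
intermediate points strictly lowers the total cost.  Redirecting `x` to `y'` on `G`, and changing
nothing off `G`, keeps both marginals since `G` is symmetric, and would lower the cost unless `G`
is null.  As `G` is open, no pair of points of `supp π` lies in `G`; hence for such triples and all
`v, w`, `viaCost z x y + viaCost z' x' y' ≤ viaCost v x y' + viaCost w x' y`.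

Lipschitz estimate (`dist_source_le`).  Suppose `‖z - y‖ ≥ ε`.  Taking the two triples equal shows
that `z` minimises `viaCost · x y`, so `z - x = λ (y - z) / ‖y - z‖`.  The exchange inequality with
`v = z'`, together with the semiconcavity of the norm away from the origin and an optimised choice
of `w`, then gives `‖x - x'‖ ≤ C(ε) ‖z - z'‖`.

Conclusion.  Let `N` be Lebesgue null.  The triples with `z = y ∈ N` have `π`-measure at most
`ν N = 0`.  Those in `supp π` with `z ∈ N` and `‖z - y‖ ≥ 1 / (n + 1)` have sources `x` in a
Lipschitz image of a subset of `N`, which is Lebesgue null and hence `μ`-null.  So `ρ N = 0`.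
-/

open MeasureTheory Filter Topology

noncomputable section

abbrev Ed (d : ℕ) := EuclideanSpace ℝ (Fin d)

variable {d : ℕ}

/-- `γ` is a coupling (transport plan) between `μ` and `ν`. -/
def IsCoupling (μ ν : Measure (Ed d)) (γ : Measure (Ed d × Ed d)) : Prop :=
  γ.map Prod.fst = μ ∧ γ.map Prod.snd = ν

/-- The optimal transport cost `𝓘_c(μ,ν)` for the pointwise cost `c`. -/
def tCost (c : Ed d → Ed d → ℝ) (μ ν : Measure (Ed d)) : ℝ :=
  sInf {r | ∃ γ : Measure (Ed d × Ed d), IsCoupling μ ν γ ∧ r = ∫ p, c p.1 p.2 ∂γ}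

/-- The Wasserstein-1 distance. -/
def W1 (μ ν : Measure (Ed d)) : ℝ := tCost (fun x y => ‖x - y‖) μ ν

/-- The squared Wasserstein-2 distance `W₂²(μ,ν)`. -/
def W2sq (μ ν : Measure (Ed d)) : ℝ := tCost (fun x y => ‖x - y‖ ^ 2) μ ν

/-- The quadratic cost `c₂(x,y) = |x-y|²/2`. -/
def c2 (x y : Ed d) : ℝ := ‖x - y‖ ^ 2 / 2

/-- The Huber cost `c_{2,λ}`. -/
def huber (lam : ℝ) (x y : Ed d) : ℝ :=
  if ‖x - y‖ ≤ lam then ‖x - y‖ ^ 2 / 2 else lam * ‖x - y‖ - lam ^ 2 / 2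

/-- The `c`-transform on `Ω`: `φ^c(x) = inf_{y ∈ Ω} c(x,y) - φ(y)`. -/
def ctrans (c : Ed d → Ed d → ℝ) (Ω : Set (Ed d)) (φ : Ed d → ℝ) (x : Ed d) : ℝ :=
  sInf ((fun y => c x y - φ y) '' Ω)

/-- A Borel probability measure concentrated on `Ω`. -/
def ProbOn (Ω : Set (Ed d)) (μ : Measure (Ed d)) : Prop :=
  IsProbabilityMeasure μ ∧ μ Ωᶜ = 0

/-- `γ` is an optimal transport plan between `μ` and `ν` for cost `c`. -/
def IsOptimalPlan (c : Ed d → Ed d → ℝ) (μ ν : Measure (Ed d))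
    (γ : Measure (Ed d × Ed d)) : Prop :=
  IsCoupling μ ν γ ∧ ∀ γ' : Measure (Ed d × Ed d), IsCoupling μ ν γ' →
    ∫ p, c p.1 p.2 ∂γ ≤ ∫ p, c p.1 p.2 ∂γ'

/-- `T` is an optimal transport map from `μ` to `ν` for cost `c`. -/
def IsOptimalMap (c : Ed d → Ed d → ℝ) (μ ν : Measure (Ed d)) (T : Ed d → Ed d) : Prop :=
  AEMeasurable T μ ∧ μ.map T = ν ∧
    ∀ γ : Measure (Ed d × Ed d), IsCoupling μ ν γ →
      ∫ x, c x (T x) ∂μ ≤ ∫ p, c p.1 p.2 ∂γ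

/-- The WROF functional `(1/2) W₂²(μ,ρ) + λ W₁(ρ,ν)`. -/
def wrof (lam : ℝ) (μ ν ρ : Measure (Ed d)) : ℝ := W2sq μ ρ / 2 + lam * W1 ρ ν

/-- `ρ ∈ B_λ(μ)`: there exists an optimal plan for the Huber cost `c_{2,λ}` from `μ` to `ρ`
supported in `{|x-y| ≤ λ}`. -/
def Bset (lam : ℝ) (μ ρ : Measure (Ed d)) : Prop :=
  ∃ γ : Measure (Ed d × Ed d), IsOptimalPlan (huber lam) μ ρ γ ∧
    γ {p : Ed d × Ed d | lam < ‖p.1 - p.2‖} = 0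

/-- `φ` solves the dual problem `sup_{φ ∈ λ-Lip(Ω)} ∫ φ^{c₂} dμ + ∫ φ dν`. -/
def DualSol (Ω : Set (Ed d)) (lam : ℝ) (μ ν : Measure (Ed d)) (φ : Ed d → ℝ) : Prop :=
  LipschitzOnWith (Real.toNNReal lam) φ Ω ∧
    ∀ ψ : Ed d → ℝ, LipschitzOnWith (Real.toNNReal lam) ψ Ω →
      (∫ x, ctrans c2 Ω ψ x ∂μ) + ∫ x, ψ x ∂ν ≤ (∫ x, ctrans c2 Ω φ x ∂μ) + ∫ x, φ x ∂ν

/-- `φ ∈ ∂((1/2)W₂²(·,μ))(ρ)`, i.e. `φ ∈ C(Ω)` with `∫φ^{c₂}dμ + ∫φ dρ = (1/2)W₂²(ρ,μ)`. -/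
def InSubdiffW2 (Ω : Set (Ed d)) (μ ρ : Measure (Ed d)) (φ : Ed d → ℝ) : Prop :=
  ContinuousOn φ Ω ∧ (∫ x, ctrans c2 Ω φ x ∂μ) + ∫ x, φ x ∂ρ = W2sq ρ μ / 2

/-- The divergence `D_λ(ν,ρ)` with reference measure `μ`. -/
def Dlam (Ω : Set (Ed d)) (lam : ℝ) (μ ν ρ : Measure (Ed d)) : EReal :=
  ((W2sq ν μ / 2 : ℝ) : EReal) - ((W2sq ρ μ / 2 : ℝ) : EReal) -
    ⨆ φ ∈ {φ : Ed d → ℝ | InSubdiffW2 Ω μ ρ φ ∧ LipschitzOnWith (Real.toNNReal lam) φ Ω},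
      (((∫ x, φ x ∂ν) - ∫ x, φ x ∂ρ : ℝ) : EReal)

/-- `φ` is `c`-concave on `Ω`: `φ = ψ^c` for some `ψ`. -/
def CConcaveOn (c : Ed d → Ed d → ℝ) (Ω : Set (Ed d)) (φ : Ed d → ℝ) : Prop :=
  ∃ ψ : Ed d → ℝ, ∀ x ∈ Ω, φ x = ctrans c Ω ψ x

/-- The (topological) support of a measure. -/
def msupport {α : Type*} [TopologicalSpace α] [MeasurableSpace α] (γ : Measure α) : Set α :=
  {p | ∀ U : Set α, IsOpen U → p ∈ U → γ U ≠ 0}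

open ProbabilityTheory

/-! ### Couplings: integrability, existence of optimal plans, gluing -/

lemma integrable_of_compact {X : Type*} [TopologicalSpace X] [MeasurableSpace X]
    [OpensMeasurableSpace X]
    {m : Measure X} [IsFiniteMeasure m] {K : Set X} (hK : IsCompact K) (hm : ∀ᵐ x ∂m, x ∈ K)
    {f : X → ℝ} (hf : Continuous f) : Integrable f m := by
  obtain ⟨C, hC⟩ := hK.exists_bound_of_continuousOn hf.continuousOn
  refine Integrable.of_bound hf.measurable.aestronglyMeasurable C ?_
  filter_upwards [hm] with x hx using hC x hx

lemma ProbOn.ae_mem {Ω : Set (Ed d)} {μ : Measure (Ed d)} (h : ProbOn Ω μ) : ∀ᵐ x ∂μ, x ∈ Ω :=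
  h.2

lemma ae_mem_of_map {X : Type*} [MeasurableSpace X] {m : Measure X} {f : X → Ed d}
    (hf : Measurable f) {μ : Measure (Ed d)} (hm : m.map f = μ) {Ω : Set (Ed d)}
    (hμ : ProbOn Ω μ) : ∀ᵐ x ∂m, f x ∈ Ω := by
  have := hμ.ae_mem
  rw [← hm] at this
  exact ae_of_ae_map hf.aemeasurable this

lemma IsCoupling.isProbabilityMeasure {μ ν : Measure (Ed d)} {γ : Measure (Ed d × Ed d)}
    (h : IsCoupling μ ν γ) [IsProbabilityMeasure μ] : IsProbabilityMeasure γ := by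
  constructor
  rw [← Set.preimage_univ (f := Prod.fst), ← Measure.map_apply measurable_fst MeasurableSet.univ,
    h.1, measure_univ]

lemma IsCoupling.ae_mem {Ω : Set (Ed d)} {μ ν : Measure (Ed d)} {γ : Measure (Ed d × Ed d)}
    (h : IsCoupling μ ν γ) (hμ : ProbOn Ω μ) (hν : ProbOn Ω ν) : ∀ᵐ p ∂γ, p ∈ Ω ×ˢ Ω := by
  filter_upwards [ae_mem_of_map measurable_fst h.1 hμ, ae_mem_of_map measurable_snd h.2 hν]
    with p h1 h2 using ⟨h1, h2⟩

lemma tCost_le {c : Ed d → Ed d → ℝ} (hc : ∀ x y, 0 ≤ c x y) {μ ν : Measure (Ed d)}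
    {γ : Measure (Ed d × Ed d)} (h : IsCoupling μ ν γ) :
    tCost c μ ν ≤ ∫ p, c p.1 p.2 ∂γ := by
  refine csInf_le ⟨0, ?_⟩ ⟨γ, h, rfl⟩
  rintro r ⟨γ, -, rfl⟩
  exact integral_nonneg fun p => hc _ _

/-- Optimal plans exist for continuous costs on a compact set: by Prokhorov's theorem the couplings
form a compact set, on which the transport cost is weakly continuous. -/
lemma exists_optimal {Ω : Set (Ed d)} (hΩ : IsCompact Ω) {c : Ed d → Ed d → ℝ}
    (hc : Continuous fun p : Ed d × Ed d => c p.1 p.2) {μ ν : Measure (Ed d)}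
    (hμ : ProbOn Ω μ) (hν : ProbOn Ω ν) :
    ∃ γ, IsCoupling μ ν γ ∧ ∫ p, c p.1 p.2 ∂γ = tCost c μ ν := by
  have := hμ.1
  have := hν.1
  have hK : IsCompact (Ω ×ˢ Ω) := hΩ.prod hΩ
  obtain ⟨C, hC⟩ := hK.exists_bound_of_continuousOn hc.continuousOn
  -- the cost truncated to `[-|C|, |C|]` is bounded and has the same integral over every coupling
  let g : BoundedContinuousFunction (Ed d × Ed d) ℝ :=
    BoundedContinuousFunction.ofNormedAddCommGroup (fun p => max (-|C|) (min |C| (c p.1 p.2)))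
      (by fun_prop) |C| (by
        intro p
        rw [Real.norm_eq_abs, abs_le]
        exact ⟨le_max_left _ _, max_le (by linarith [abs_nonneg C]) (min_le_left _ _)⟩)
  have hg : ∀ γ, IsCoupling μ ν γ → ∫ p, g p ∂γ = ∫ p, c p.1 p.2 ∂γ := by
    intro γ hγ
    refine integral_congr_ae ?_
    filter_upwards [hγ.ae_mem hμ hν] with p hp
    have h1 := abs_le.1 ((hC p hp).trans (le_abs_self C))
    change max (-|C|) (min |C| (c p.1 p.2)) = c p.1 p.2
    rw [min_eq_right h1.2, max_eq_right h1.1]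
  let S : Set (ProbabilityMeasure (Ed d × Ed d)) :=
    {γ | IsCoupling μ ν (γ : Measure (Ed d × Ed d))}
  have hScl : IsClosed S := by
    have h1 : Continuous fun γ : ProbabilityMeasure (Ed d × Ed d) =>
        γ.map (f := Prod.fst) measurable_fst.aemeasurable :=
      ProbabilityMeasure.continuous_map continuous_fst
    have h2 : Continuous fun γ : ProbabilityMeasure (Ed d × Ed d) =>
        γ.map (f := Prod.snd) measurable_snd.aemeasurable :=
      ProbabilityMeasure.continuous_map continuous_snd
    have : S = {γ | γ.map (f := Prod.fst) measurable_fst.aemeasurable = ⟨μ, hμ.1⟩} ∩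
        {γ | γ.map (f := Prod.snd) measurable_snd.aemeasurable = ⟨ν, hν.1⟩} := by
      ext γ
      exact ⟨fun h => ⟨Subtype.ext h.1, Subtype.ext h.2⟩,
        fun h => ⟨congrArg Subtype.val h.1, congrArg Subtype.val h.2⟩⟩
    rw [this]
    exact (isClosed_eq h1 continuous_const).inter (isClosed_eq h2 continuous_const)
  have hSc : IsCompact S := by
    refine IsCompact.of_isClosed_subset
      (isCompact_setOfPred_probabilityMeasure_mass_eq_compl_isCompact_le (u := fun _ => 0)
        (K := fun _ => Ω ×ˢ Ω) tendsto_const_nhds (fun _ => hK) (Or.inl inferInstance)) hScl ?_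
    intro γ hγ n
    have h : (γ : Measure (Ed d × Ed d)) (Ω ×ˢ Ω)ᶜ = 0 := hγ.ae_mem hμ hν
    refine le_of_eq ?_
    rw [ProbabilityMeasure.null_iff_toMeasure_null]
    exact h
  have hSne : S.Nonempty := by
    refine ⟨⟨μ.prod ν, inferInstance⟩, ?_⟩
    change IsCoupling μ ν (μ.prod ν)
    simp [IsCoupling]
  have hcont : Continuous fun γ : ProbabilityMeasure (Ed d × Ed d) =>
      ∫ p, g p ∂(γ : Measure (Ed d × Ed d)) :=
    ProbabilityMeasure.continuous_integral_boundedContinuousFunction g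
  obtain ⟨γ, hγS, hmin⟩ := hSc.exists_isMinOn hSne hcont.continuousOn
  have hγ : IsCoupling μ ν (γ : Measure (Ed d × Ed d)) := hγS
  have hleast : IsLeast {r | ∃ γ : Measure (Ed d × Ed d), IsCoupling μ ν γ ∧
      r = ∫ p, c p.1 p.2 ∂γ} (∫ p, c p.1 p.2 ∂(γ : Measure (Ed d × Ed d))) := by
    refine ⟨⟨γ, hγ, rfl⟩, ?_⟩
    rintro r ⟨γ', hγ', rfl⟩
    have := hγ'.isProbabilityMeasure
    rw [← hg _ hγ, ← hg _ hγ']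
    exact hmin (show (⟨γ', this⟩ : ProbabilityMeasure (Ed d × Ed d)) ∈ S from hγ')
  exact ⟨γ, hγ, hleast.csInf_eq.symm⟩

/-- Gluing of plans along their common marginal `ρ`, by making `x` and `y` conditionally independent
given `z`. -/
lemma exists_glue {μ ρ ν : Measure (Ed d)} [IsProbabilityMeasure ρ]
    {γ₁ γ₂ : Measure (Ed d × Ed d)} [IsProbabilityMeasure γ₁] [IsProbabilityMeasure γ₂]
    (h₁ : IsCoupling μ ρ γ₁) (h₂ : IsCoupling ρ ν γ₂) :
    ∃ π : Measure (Ed d × Ed d × Ed d), IsProbabilityMeasure π ∧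
      π.map (fun t => (t.2.1, t.1)) = γ₁ ∧ π.map (fun t => (t.1, t.2.2)) = γ₂ := by
  let γ₀ := γ₁.map Prod.swap
  have : IsProbabilityMeasure γ₀ := Measure.isProbabilityMeasure_map measurable_swap.aemeasurable
  have e0 : γ₀.fst = ρ := by
    rw [Measure.fst, Measure.map_map measurable_fst measurable_swap, ← h₁.2]; rfl
  have e2 : γ₂.fst = ρ := h₂.1
  refine ⟨ρ ⊗ₘ (γ₀.condKernel ×ₖ γ₂.condKernel), inferInstance, ?_, ?_⟩
  · have : (fun t : Ed d × Ed d × Ed d => (t.2.1, t.1)) = Prod.swap ∘ (Prod.map id Prod.fst) := rfl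
    rw [this, ← Measure.map_map measurable_swap (by fun_prop),
      ← Measure.compProd_map measurable_fst, ← Kernel.fst_eq, Kernel.fst_prod]
    nth_rewrite 1 [← e0]
    rw [Measure.disintegrate, Measure.map_map measurable_swap measurable_swap]
    simp
  · have : (fun t : Ed d × Ed d × Ed d => (t.1, t.2.2)) = Prod.map id Prod.snd := rfl
    rw [this, ← Measure.compProd_map measurable_snd, ← Kernel.snd_eq, Kernel.snd_prod]
    nth_rewrite 1 [← e2]
    rw [Measure.disintegrate]

/-! ### The cost of a route with an intermediate point -/

/-- Triples `(z, x, y)`: an intermediate point `z`, a source `x` and a target `y`. -/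
abbrev Triple (d : ℕ) := Ed d × Ed d × Ed d

/-- The cost `‖x - z‖² / 2 + λ ‖z - y‖` of moving mass from `x` to `y` through `z`. -/
def viaCost (lam : ℝ) (z x y : Ed d) : ℝ := ‖x - z‖ ^ 2 / 2 + lam * ‖z - y‖

/-- For `λ > 0`, the minimiser of `viaCost lam · x y`: the point at distance `min λ ‖y - x‖` from `x` on the
segment from `x` to `y`. -/
def bestVia (lam : ℝ) (x y : Ed d) : Ed d := x + (max 1 (‖y - x‖ / lam))⁻¹ • (y - x)

lemma continuous_bestVia (lam : ℝ) :
    Continuous fun p : Ed d × Ed d => bestVia lam p.1 p.2 := by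
  unfold bestVia
  have h1 : Continuous fun p : Ed d × Ed d => max 1 (‖p.2 - p.1‖ / lam) := by fun_prop
  have h2 : Continuous fun p : Ed d × Ed d => p.2 - p.1 := by fun_prop
  exact continuous_fst.add ((h1.inv₀ fun p =>
    (lt_of_lt_of_le one_pos (le_max_left _ _)).ne').smul h2)

lemma continuous_viaCost (lam : ℝ) :
    Continuous fun t : Triple d => viaCost lam t.1 t.2.1 t.2.2 := by
  unfold viaCost
  fun_prop

lemma bestVia_mem {Ω : Set (Ed d)} (hΩ : Convex ℝ Ω) (lam : ℝ) {x y : Ed d} (hx : x ∈ Ω)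
    (hy : y ∈ Ω) : bestVia lam x y ∈ Ω := by
  have h1 : 1 ≤ max 1 (‖y - x‖ / lam) := le_max_left _ _
  exact hΩ.add_smul_sub_mem hx hy ⟨by positivity, inv_le_one_of_one_le₀ h1⟩

lemma viaCost_bestVia_le {lam : ℝ} (hlam : 0 < lam) (x y w : Ed d) :
    viaCost lam (bestVia lam x y) x y ≤ viaCost lam w x y := by
  have htri : ‖y - x‖ ≤ ‖x - w‖ + ‖w - y‖ := by
    have := norm_add_le (x - w) (w - y)
    rwa [sub_add_sub_cancel, norm_sub_rev] at this
  have hs := norm_nonneg (x - w)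
  have hq := norm_nonneg (w - y)
  have hr := norm_nonneg (y - x)
  have key : ∀ c : ℝ, 0 ≤ c → c ≤ 1 → viaCost lam (x + c • (y - x)) x y
      = (c * ‖y - x‖) ^ 2 / 2 + lam * ((1 - c) * ‖y - x‖) := by
    intro c h0 h1
    have e1 : x - (x + c • (y - x)) = (-c) • (y - x) := by module
    have e2 : (x + c • (y - x)) - y = (-(1 - c)) • (y - x) := by module
    rw [viaCost, e1, e2, norm_smul, norm_smul, norm_neg, norm_neg, Real.norm_of_nonneg h0,
      Real.norm_of_nonneg (by linarith : 0 ≤ 1 - c)]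
  unfold bestVia
  rcases le_total (‖y - x‖) lam with h | h
  · have : ‖y - x‖ / lam ≤ 1 := (div_le_one hlam).2 h
    rw [max_eq_left this, inv_one, key 1 (by norm_num) le_rfl, viaCost]
    rcases le_total ‖x - w‖ ‖y - x‖ with h' | h'
    · nlinarith [mul_nonneg (sub_nonneg.2 h') (sub_nonneg.2 h),
        mul_nonneg (sub_nonneg.2 h') (sub_nonneg.2 (h'.trans h)),
        mul_le_mul_of_nonneg_left htri hlam.le]
    · nlinarith [mul_nonneg hlam.le hq]
  · have h1 : 1 ≤ ‖y - x‖ / lam := (one_le_div hlam).2 h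
    have hpos : 0 < ‖y - x‖ := hlam.trans_le h
    rw [max_eq_right h1, inv_div, key _ (by positivity) ((div_le_one hpos).2 h), viaCost]
    have e : lam / ‖y - x‖ * ‖y - x‖ = lam := div_mul_cancel₀ _ hpos.ne'
    rw [sub_mul, one_mul, e]
    nlinarith [sq_nonneg (‖x - w‖ - lam), mul_le_mul_of_nonneg_left htri hlam.le]

/-- Quadratic upper bound (semiconcavity) for the norm away from the origin. -/
lemma norm_add_le_quadratic {a b : Ed d} {ε : ℝ} (hε : 0 < ε) (ha : ε ≤ ‖a‖) :
    ‖a + b‖ ≤ ‖a‖ + inner ℝ (‖a‖⁻¹ • a) b + ‖b‖ ^ 2 / (2 * ε) := by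
  have hpos : 0 < ‖a‖ := hε.trans_le ha
  have h1 : ‖a + b‖ ^ 2 = ‖a‖ ^ 2 + 2 * inner ℝ a b + ‖b‖ ^ 2 := norm_add_sq_real a b
  have h2 : ‖a + b‖ ≤ ‖a‖ + inner ℝ (‖a‖⁻¹ • a) b + ‖b‖ ^ 2 / (2 * ‖a‖) := by
    rw [real_inner_smul_left]
    have : ‖a‖ + ‖a‖⁻¹ * inner ℝ a b + ‖b‖ ^ 2 / (2 * ‖a‖) = (‖a‖ ^ 2 + ‖a + b‖ ^ 2) / (2 * ‖a‖) := by
      rw [h1]; field_simp; ring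
    rw [this, le_div_iff₀ (by positivity)]
    nlinarith [sq_nonneg (‖a‖ - ‖a + b‖)]
  have h3 : ‖b‖ ^ 2 / (2 * ‖a‖) ≤ ‖b‖ ^ 2 / (2 * ε) := by gcongr
  linarith

/-- First-order optimality at an intermediate point `z ≠ y`: `z - x = λ (y - z) / ‖y - z‖`. -/
lemma first_order {lam ε : ℝ} (hlam : 0 < lam) (hε : 0 < ε) {x y z : Ed d} (hzy : ε ≤ ‖z - y‖)
    (hmin : ∀ w, viaCost lam z x y ≤ viaCost lam w x y) :
    z - x + lam • (‖z - y‖⁻¹ • (z - y)) = 0 := by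
  set e := ‖z - y‖⁻¹ • (z - y) with he
  set v := z - x + lam • e with hv
  set K := lam / (2 * ε) + 1 / 2 with hK
  have hKpos : 0 < K := by positivity
  -- step `-s • v` with `s = 1 / (2K)`
  set s := 1 / (2 * K) with hs
  have hm := hmin (z + (-s) • v)
  have hq := norm_add_le_quadratic (b := (-s) • v) hε hzy
  rw [← he] at hq
  unfold viaCost at hm
  have e1 : x - (z + (-s) • v) = (x - z) + s • v := by module
  have e2 : z + (-s) • v - y = (z - y) + (-s) • v := by module
  rw [e1, e2, norm_add_sq_real, real_inner_smul_right, norm_smul, mul_pow, Real.norm_eq_abs,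
    sq_abs] at hm
  rw [real_inner_smul_right, norm_smul, mul_pow, Real.norm_eq_abs, sq_abs] at hq
  have hvv : inner ℝ (x - z) v - lam * inner ℝ e v = - ‖v‖ ^ 2 := by
    rw [← real_inner_self_eq_norm_sq, ← real_inner_smul_left, ← inner_sub_left, ← inner_neg_left]
    congr 1
    rw [hv]; abel
  have hq' := mul_le_mul_of_nonneg_left hq hlam.le
  have hfin : s * ‖v‖ ^ 2 ≤ K * s ^ 2 * ‖v‖ ^ 2 := by
    have : lam * ((-s) ^ 2 * ‖v‖ ^ 2 / (2 * ε)) = lam / (2 * ε) * s ^ 2 * ‖v‖ ^ 2 := by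
      field_simp
    rw [hK]
    have h5 : s * (inner ℝ (x - z) v - lam * inner ℝ e v) = s * (- ‖v‖ ^ 2) := by rw [hvv]
    nlinarith
  have hKs : K * s = 1 / 2 := by rw [hs]; field_simp
  have hspos : 0 < s := by positivity
  have : K * s ^ 2 * ‖v‖ ^ 2 = (1 / 2) * (s * ‖v‖ ^ 2) := by
    rw [← hKs]; ring
  have h0 : s * ‖v‖ ^ 2 = 0 := le_antisymm (by linarith) (by positivity)
  have h00 : ‖v‖ ^ 2 = 0 := (mul_eq_zero.1 h0).resolve_left hspos.ne'
  exact norm_eq_zero.1 (pow_eq_zero_iff (two_ne_zero) |>.1 h00)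

/-- If exchanging the targets of two triples never pays, then `x` depends on `z` in a Lipschitz
way as long as `z` stays at distance at least `ε` from `y`. -/
lemma dist_source_le {lam ε : ℝ} (hlam : 0 < lam) (hε : 0 < ε) {x y z x' y' z' : Ed d}
    (hzy : ε ≤ ‖z - y‖) (hmin : ∀ w, viaCost lam z x y ≤ viaCost lam w x y)
    (hswap : ∀ w, viaCost lam z x y + viaCost lam z' x' y' ≤
      viaCost lam z' x y' + viaCost lam w x' y) :
    ‖x - x'‖ ≤ (2 * (lam / ε + 1 / 2) + 1) * ‖z - z'‖ := by
  have hfo := first_order hlam hε hzy hmin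
  set e := ‖z - y‖⁻¹ • (z - y) with he
  set q := (z' - x') - (z - x) with hq
  set D := z - z' with hD
  set L := lam / ε + 1 / 2 with hL
  have hLpos : 0 < L := by positivity
  -- the intermediate point `w = z' - s • q` with `s = 1 / (2L)`
  set s := 1 / (2 * L) with hs
  have hm := hswap (z' + (-s) • q)
  unfold viaCost at hm
  have hb := norm_add_le_quadratic (b := (-s) • q - D) hε hzy
  rw [← he] at hb
  have e1 : z' + (-s) • q - y = (z - y) + ((-s) • q - D) := by rw [hD]; abel
  have e2 : x' - (z' + (-s) • q) = (x' - z') + s • q := by module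
  have e3 : x - z' = (x - z) + D := by rw [hD]; abel
  rw [e1, e2, e3, norm_add_sq_real (x' - z'), norm_add_sq_real (x - z) D, real_inner_smul_right,
    norm_smul, mul_pow, Real.norm_eq_abs, sq_abs] at hm
  have hpar : ‖(-s) • q - D‖ ^ 2 ≤ 2 * s ^ 2 * ‖q‖ ^ 2 + 2 * ‖D‖ ^ 2 := by
    have h1 := parallelogram_law_with_norm ℝ ((-s) • q) D
    have h2 : ‖(-s) • q‖ * ‖(-s) • q‖ = s ^ 2 * ‖q‖ ^ 2 := by
      rw [norm_smul, Real.norm_eq_abs, abs_neg]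
      rw [show |s| * ‖q‖ * (|s| * ‖q‖) = |s| ^ 2 * ‖q‖ ^ 2 by ring, sq_abs]
    nlinarith [mul_self_nonneg ‖(-s) • q + D‖]
  have hle : lam * inner ℝ e ((-s) • q - D) = s * inner ℝ (z - x) q + inner ℝ (z - x) D := by
    have : lam • e = -(z - x) := by
      rw [eq_neg_iff_add_eq_zero, add_comm]; exact hfo
    rw [← real_inner_smul_left, this, inner_sub_right, real_inner_smul_right, inner_neg_left,
      inner_neg_left]
    ring
  have hqq : inner ℝ (x' - z') q + inner ℝ (z - x) q = - ‖q‖ ^ 2 := by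
    rw [← real_inner_self_eq_norm_sq, ← inner_add_left, ← inner_neg_left]
    congr 1
    rw [hq]; abel
  have hDD : inner ℝ (x - z) D = - inner ℝ (z - x) D := by
    rw [← inner_neg_left, neg_sub]
  have hb' := mul_le_mul_of_nonneg_left hb hlam.le
  have hpar' : lam * (‖(-s) • q - D‖ ^ 2 / (2 * ε)) ≤
      lam / ε * (s ^ 2 * ‖q‖ ^ 2 + ‖D‖ ^ 2) := by
    rw [show lam * (‖(-s) • q - D‖ ^ 2 / (2 * ε)) = lam / ε * (‖(-s) • q - D‖ ^ 2 / 2) by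
      field_simp]
    gcongr
    linarith
  have hmain : s * ‖q‖ ^ 2 ≤ L * (s ^ 2 * ‖q‖ ^ 2) + L * ‖D‖ ^ 2 := by
    have h5 : s * (inner ℝ (x' - z') q + inner ℝ (z - x) q) = s * (- ‖q‖ ^ 2) := by rw [hqq]
    rw [hL]
    nlinarith
  have hLs : L * s = 1 / 2 := by rw [hs]; field_simp
  have h6 : ‖q‖ ^ 2 ≤ (2 * L * ‖D‖) ^ 2 := by
    have h7 : L * (s * ‖q‖ ^ 2) ≤ L * (L * (s ^ 2 * ‖q‖ ^ 2) + L * ‖D‖ ^ 2) := by gcongr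
    have h8 : L * (L * (s ^ 2 * ‖q‖ ^ 2) + L * ‖D‖ ^ 2)
        = (L * s) ^ 2 * ‖q‖ ^ 2 + L ^ 2 * ‖D‖ ^ 2 := by ring
    rw [h8, ← mul_assoc, hLs] at h7
    nlinarith
  have h9 : ‖q‖ ≤ 2 * L * ‖D‖ := le_of_sq_le_sq h6 (by positivity)
  have h10 : x - x' = D + q := by rw [hD, hq]; abel
  rw [h10]
  calc ‖D + q‖ ≤ ‖D‖ + ‖q‖ := norm_add_le _ _
    _ ≤ (2 * L + 1) * ‖D‖ := by linarith

/-! ### The exchange inequality -/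

lemma wrof_le_of_triple {Ω : Set (Ed d)} (hΩ : IsCompact Ω) {lam : ℝ} (hlam : 0 < lam)
    {μ ν : Measure (Ed d)} (hμ : ProbOn Ω μ) (hν : ProbOn Ω ν)
    {θ : Measure (Triple d)} [IsProbabilityMeasure θ]
    (hx : θ.map (fun t => t.2.1) = μ) (hy : θ.map (fun t => t.2.2) = ν)
    (hz : ProbOn Ω (θ.map fun t => t.1)) :
    wrof lam μ ν (θ.map fun t => t.1) ≤ ∫ t, viaCost lam t.1 t.2.1 t.2.2 ∂θ := by
  have hmem : ∀ᵐ t ∂θ, t ∈ Ω ×ˢ Ω ×ˢ Ω := by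
    filter_upwards [ae_mem_of_map (f := fun t : Triple d => t.1) (by fun_prop) rfl hz,
      ae_mem_of_map (f := fun t : Triple d => t.2.1) (by fun_prop) hx hμ,
      ae_mem_of_map (f := fun t : Triple d => t.2.2) (by fun_prop) hy hν]
      with t h1 h2 h3 using ⟨h1, h2, h3⟩
  have hK : IsCompact (Ω ×ˢ Ω ×ˢ Ω) := hΩ.prod (hΩ.prod hΩ)
  have i1 : Integrable (fun t : Triple d => ‖t.2.1 - t.1‖ ^ 2 / 2) θ :=
    integrable_of_compact hK hmem (by fun_prop)
  have i2 : Integrable (fun t : Triple d => lam * ‖t.1 - t.2.2‖) θ :=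
    integrable_of_compact hK hmem (by fun_prop)
  have m1 : Measurable fun t : Triple d => (t.2.1, t.1) := by fun_prop
  have m2 : Measurable fun t : Triple d => (t.1, t.2.2) := by fun_prop
  have c1 : IsCoupling μ (θ.map fun t => t.1) (θ.map fun t => (t.2.1, t.1)) :=
    ⟨by rw [Measure.map_map measurable_fst m1, ← hx]; rfl,
      by rw [Measure.map_map measurable_snd m1]; rfl⟩
  have c2 : IsCoupling (θ.map fun t => t.1) ν (θ.map fun t => (t.1, t.2.2)) :=
    ⟨by rw [Measure.map_map measurable_fst m2]; rfl,
      by rw [Measure.map_map measurable_snd m2, ← hy]; rfl⟩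
  have l1 := tCost_le (c := fun x y => ‖x - y‖ ^ 2) (fun x y => by positivity) c1
  have l2 := tCost_le (c := fun x y => ‖x - y‖) (fun x y => by positivity) c2
  rw [integral_map m1.aemeasurable
    (Continuous.aestronglyMeasurable (by fun_prop))] at l1
  rw [integral_map m2.aemeasurable
    (Continuous.aestronglyMeasurable (by fun_prop))] at l2
  unfold viaCost
  rw [integral_add i1 i2, integral_div, integral_const_mul]
  unfold wrof W2sq W1
  gcongr

/-- If `π` is optimal among the laws of triples with its source and target marginals, then almost
no pair of independent triples can be improved by exchanging the two targets and re-routing through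
`bestVia`. -/
lemma swap_null {Ω : Set (Ed d)} (hΩ : IsCompact Ω) (hconv : Convex ℝ Ω) {lam : ℝ}
    {μ ν : Measure (Ed d)} (hμ : ProbOn Ω μ) (hν : ProbOn Ω ν)
    {π : Measure (Triple d)} [IsProbabilityMeasure π]
    (hx : π.map (fun t => t.2.1) = μ) (hy : π.map (fun t => t.2.2) = ν)
    (hz : ProbOn Ω (π.map fun t => t.1))
    (hopt : ∀ θ : Measure (Triple d), IsProbabilityMeasure θ →
      θ.map (fun t => t.2.1) = μ → θ.map (fun t => t.2.2) = ν →
      ProbOn Ω (θ.map fun t => t.1) →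
      ∫ t, viaCost lam t.1 t.2.1 t.2.2 ∂π ≤ ∫ t, viaCost lam t.1 t.2.1 t.2.2 ∂θ) :
    (π.prod π) {p | viaCost lam (bestVia lam p.1.2.1 p.2.2.2) p.1.2.1 p.2.2.2 +
      viaCost lam (bestVia lam p.2.2.1 p.1.2.2) p.2.2.1 p.1.2.2 <
      viaCost lam p.1.1 p.1.2.1 p.1.2.2 + viaCost lam p.2.1 p.2.2.1 p.2.2.2} = 0 := by
  classical
  set P := π.prod π with hP
  let F : Triple d → ℝ := fun t => viaCost lam t.1 t.2.1 t.2.2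
  have hF : Continuous F := continuous_viaCost lam
  let a : Triple d × Triple d → ℝ := fun p => F p.1
  let b : Triple d × Triple d → ℝ := fun p => F (bestVia lam p.1.2.1 p.2.2.2, p.1.2.1, p.2.2.2)
  have hbv : Continuous fun p : Triple d × Triple d => bestVia lam p.1.2.1 p.2.2.2 :=
    (continuous_bestVia lam).comp (g := fun q : Ed d × Ed d => bestVia lam q.1 q.2)
      (f := fun p : Triple d × Triple d => (p.1.2.1, p.2.2.2)) (by fun_prop)
  have ha : Continuous a := hF.comp continuous_fst
  have hmoved : Continuous fun p : Triple d × Triple d =>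
      ((bestVia lam p.1.2.1 p.2.2.2, p.1.2.1, p.2.2.2) : Triple d) := hbv.prodMk (by fun_prop)
  have hb : Continuous b := hF.comp hmoved
  have hsw : MeasurePreserving (Prod.swap : Triple d × Triple d → Triple d × Triple d) P P := Measure.measurePreserving_swap
  change P {p | b p + b p.swap < a p + a p.swap} = 0
  set G : Set (Triple d × Triple d) := {p | b p + b p.swap < a p + a p.swap} with hG
  have hGm : MeasurableSet G := by
    refine (isOpen_lt ?_ ?_).measurableSet
    · exact hb.add (hb.comp continuous_swap)
    · exact ha.add (ha.comp continuous_swap)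
  have hGs : ∀ p, p.swap ∈ G ↔ p ∈ G := by
    intro p
    simp only [hG, Set.mem_ofPred_eq, Prod.swap_swap, add_comm]
  -- everything is concentrated on a compact set
  have hmem : ∀ᵐ t ∂π, t ∈ Ω ×ˢ Ω ×ˢ Ω := by
    filter_upwards [ae_mem_of_map (f := fun t : Triple d => t.1) (by fun_prop) rfl hz,
      ae_mem_of_map (f := fun t : Triple d => t.2.1) (by fun_prop) hx hμ,
      ae_mem_of_map (f := fun t : Triple d => t.2.2) (by fun_prop) hy hν]
      with t h1 h2 h3 using ⟨h1, h2, h3⟩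
  have hK : IsCompact (Ω ×ˢ Ω ×ˢ Ω) := hΩ.prod (hΩ.prod hΩ)
  have hfst : MeasurePreserving (Prod.fst : Triple d × Triple d → Triple d) P π := measurePreserving_fst
  have hsnd : MeasurePreserving (Prod.snd : Triple d × Triple d → Triple d) P π := measurePreserving_snd
  have hmemP : ∀ᵐ p ∂P, p ∈ (Ω ×ˢ Ω ×ˢ Ω) ×ˢ (Ω ×ˢ Ω ×ˢ Ω) := by
    filter_upwards [hfst.quasiMeasurePreserving.ae hmem, hsnd.quasiMeasurePreserving.ae hmem]
      with p h1 h2 using ⟨h1, h2⟩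
  have ia : Integrable a P := integrable_of_compact (hK.prod hK) hmemP ha
  have ib : Integrable b P := integrable_of_compact (hK.prod hK) hmemP hb
  -- the competitor: redirect the mass of `x` towards `y'` on the event `G`
  let Φ : Triple d × Triple d → Triple d := G.piecewise
    (fun p => (bestVia lam p.1.2.1 p.2.2.2, p.1.2.1, p.2.2.2)) Prod.fst
  have hΦ : Measurable Φ := Measurable.piecewise hGm hmoved.measurable measurable_fst
  have hθP : IsProbabilityMeasure (P.map Φ) := Measure.isProbabilityMeasure_map hΦ.aemeasurable
  have hθx : (P.map Φ).map (fun t => t.2.1) = μ := by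
    rw [Measure.map_map (by fun_prop) hΦ, ← hx, ← hfst.map_eq,
      Measure.map_map (by fun_prop) measurable_fst]
    congr 1
    ext1 p
    by_cases hp : p ∈ G <;> simp [Φ, hp]
  have hθy : (P.map Φ).map (fun t => t.2.2) = ν := by
    rw [Measure.map_map (by fun_prop) hΦ, ← hy, ← hfst.map_eq,
      Measure.map_map (by fun_prop) measurable_fst]
    ext B hB
    have m1 : Measurable ((fun t : Triple d => t.2.2) ∘ (Prod.fst : Triple d × Triple d → Triple d)) := by
      fun_prop
    rw [Measure.map_apply (Measurable.comp (by fun_prop) hΦ) hB,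
      Measure.map_apply (by fun_prop) hB]
    rw [← measure_inter_add_sdiff _ hGm,
      ← measure_inter_add_sdiff ((fun t : Triple d => t.2.2) ∘ Prod.fst ⁻¹' B) hGm]
    congr 1
    · have e1 : ((fun t : Triple d => t.2.2) ∘ Φ) ⁻¹' B ∩ G =
          Prod.swap ⁻¹' (((fun t : Triple d => t.2.2) ∘ Prod.fst) ⁻¹' B ∩ G) := by
        ext p
        by_cases hp : p ∈ G <;> simp [Φ, hp, hGs]
      rw [e1, hsw.measure_preimage ((m1 hB).inter hGm).nullMeasurableSet]
    · congr 1
      ext p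
      by_cases hp : p ∈ G <;> simp [Φ, hp]
  have hθz : ProbOn Ω ((P.map Φ).map fun t => t.1) := by
    refine ⟨Measure.isProbabilityMeasure_map (by fun_prop), ?_⟩
    rw [Measure.map_map (by fun_prop) hΦ]
    have hΩm : MeasurableSet Ω := hΩ.isClosed.measurableSet
    rw [Measure.map_apply (Measurable.comp (by fun_prop) hΦ) hΩm.compl]
    change ∀ᵐ p ∂P, (Φ p).1 ∈ Ω
    filter_upwards [hmemP] with p hp
    by_cases hpG : p ∈ G
    · simpa [Φ, hpG] using bestVia_mem hconv lam hp.1.2.1 hp.2.2.2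
    · simpa [Φ, hpG] using hp.1.1
  have hle := hopt _ hθP hθx hθy hθz
  rw [integral_map hΦ.aemeasurable hF.aestronglyMeasurable] at hle
  have e1 : ∫ t, viaCost lam t.1 t.2.1 t.2.2 ∂π = ∫ p, a p ∂P := by
    rw [← hfst.map_eq, integral_map measurable_fst.aemeasurable hF.aestronglyMeasurable]
  have e2 : (fun p => viaCost lam (Φ p).1 (Φ p).2.1 (Φ p).2.2) =
      fun p => a p - G.indicator (fun p => a p - b p) p := by
    ext p
    by_cases hp : p ∈ G <;> simp [Φ, hp, a, b, F]
  have ig : Integrable (G.indicator fun p => a p - b p) P := (ia.sub ib).indicator hGm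
  rw [e1, e2, integral_sub ia ig] at hle
  have hneg : ∫ p, G.indicator (fun p => a p - b p) p ∂P ≤ 0 := by linarith
  -- symmetrise under exchange of the two triples
  have igs : Integrable (fun p => G.indicator (fun p => a p - b p) (Prod.swap p)) P :=
    hsw.integrable_comp_of_integrable ig
  have hsym : ∫ p, G.indicator (fun p => a p - b p) (Prod.swap p) ∂P =
      ∫ p, G.indicator (fun p => a p - b p) p ∂P :=
    hsw.integral_comp' (f := MeasurableEquiv.prodComm) _
  let k : Triple d × Triple d → ℝ := fun p => G.indicator (fun p => a p - b p) p +
    G.indicator (fun p => a p - b p) p.swap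
  have hk : ∀ p, k p = G.indicator (fun p => (a p + a p.swap) - (b p + b p.swap)) p := by
    intro p
    by_cases hp : p ∈ G
    · simp only [k, Set.indicator_of_mem hp, Set.indicator_of_mem ((hGs p).2 hp)]; ring
    · have : p.swap ∉ G := fun h => hp ((hGs p).1 h)
      simp only [k, Set.indicator_of_notMem hp, Set.indicator_of_notMem this]; ring
  have hk0 : 0 ≤ k := by
    intro p
    rw [hk]
    refine Set.indicator_nonneg (fun p hp => ?_) p
    exact sub_nonneg.2 (le_of_lt hp)
  have hkint : ∫ p, k p ∂P = 0 := by
    refine le_antisymm ?_ (integral_nonneg hk0)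
    rw [integral_add ig igs, hsym]
    linarith
  have hae := (integral_eq_zero_iff_of_nonneg hk0 (ig.add igs)).1 hkint
  have : ∀ᵐ p ∂P, p ∉ G := by
    filter_upwards [hae] with p hp hpG
    rw [hk, Set.indicator_of_mem hpG] at hp
    exact absurd hp (sub_pos.2 hpG).ne'
  simpa [ae_iff] using this

/-- The exchange inequality on the support of `π`, where it holds for every pair because the set of
improvable pairs is open. -/
lemma viaCost_le_of_mem_support {lam : ℝ} (hlam : 0 < lam)
    {π : Measure (Triple d)} [IsProbabilityMeasure π]
    (hnull : (π.prod π) {p | viaCost lam (bestVia lam p.1.2.1 p.2.2.2) p.1.2.1 p.2.2.2 +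
      viaCost lam (bestVia lam p.2.2.1 p.1.2.2) p.2.2.1 p.1.2.2 <
      viaCost lam p.1.1 p.1.2.1 p.1.2.2 + viaCost lam p.2.1 p.2.2.1 p.2.2.2} = 0)
    {t t' : Triple d} (ht : t ∈ π.support) (ht' : t' ∈ π.support) (v w : Ed d) :
    viaCost lam t.1 t.2.1 t.2.2 + viaCost lam t'.1 t'.2.1 t'.2.2 ≤
      viaCost lam v t.2.1 t'.2.2 + viaCost lam w t'.2.1 t.2.2 := by
  refine le_trans (not_lt.1 fun hlt => ?_)
    (add_le_add (viaCost_bestVia_le hlam t.2.1 t'.2.2 v) (viaCost_bestVia_le hlam t'.2.1 t.2.2 w))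
  have hF := continuous_viaCost (d := d) lam
  have hB : Continuous fun q : Ed d × Ed d => viaCost lam (bestVia lam q.1 q.2) q.1 q.2 :=
    hF.comp (f := fun q : Ed d × Ed d => (bestVia lam q.1 q.2, q.1, q.2))
      ((continuous_bestVia lam).prodMk continuous_id)
  have h1 : Continuous fun p : Triple d × Triple d =>
      viaCost lam (bestVia lam p.1.2.1 p.2.2.2) p.1.2.1 p.2.2.2 :=
    hB.comp (f := fun p : Triple d × Triple d => (p.1.2.1, p.2.2.2)) (by fun_prop)
  have h2 : Continuous fun p : Triple d × Triple d =>
      viaCost lam (bestVia lam p.2.2.1 p.1.2.2) p.2.2.1 p.1.2.2 :=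
    hB.comp (f := fun p : Triple d × Triple d => (p.2.2.1, p.1.2.2)) (by fun_prop)
  have h3 : Continuous fun p : Triple d × Triple d => viaCost lam p.1.1 p.1.2.1 p.1.2.2 :=
    hF.comp (f := fun p : Triple d × Triple d => p.1) continuous_fst
  have h4 : Continuous fun p : Triple d × Triple d => viaCost lam p.2.1 p.2.2.1 p.2.2.2 :=
    hF.comp (f := fun p : Triple d × Triple d => p.2) continuous_snd
  have hopen := isOpen_lt (h1.add h2) (h3.add h4)
  obtain ⟨U, hU, V, hV, hUV⟩ := mem_nhds_prod_iff.1 (hopen.mem_nhds (x := (t, t')) hlt)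
  have hz : (π.prod π) (U ×ˢ V) = 0 := measure_mono_null hUV hnull
  rw [Measure.prod_prod, mul_eq_zero] at hz
  rcases hz with h | h
  · exact ((Measure.mem_support_iff_forall t).1 ht U hU).ne' h
  · exact ((Measure.mem_support_iff_forall t').1 ht' V hV).ne' h

/-! ### Null sets and the conclusion -/

/-- A set whose points are parametrised in a Lipschitz way by points of a null set is null. -/
lemma volume_eq_zero_of_lipschitz {ι : Type*} {A : Set ι} {f g : ι → Ed d} {C : ℝ} (hC : 0 ≤ C)
    (h : ∀ i ∈ A, ∀ j ∈ A, ‖g i - g j‖ ≤ C * ‖f i - f j‖)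
    (hf : (volume : Measure (Ed d)) (f '' A) = 0) : (volume : Measure (Ed d)) (g '' A) = 0 := by
  have hac₁ : (volume : Measure (Ed d)) ≪ μH[Module.finrank ℝ (Ed d)] :=
    Measure.absolutelyContinuous_isAddHaarMeasure _ _
  have hac₂ : μH[Module.finrank ℝ (Ed d)] ≪ (volume : Measure (Ed d)) :=
    Measure.absolutelyContinuous_isAddHaarMeasure _ _
  have hchoose : ∀ u : f '' A, ∃ i ∈ A, f i = u := fun u => u.2
  choose s hsA hs using hchoose
  let F : f '' A → Ed d := fun u => g (s u)
  have hF : LipschitzWith C.toNNReal F := by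
    refine LipschitzWith.of_dist_le_mul fun u v => ?_
    rw [Subtype.dist_eq, dist_eq_norm, dist_eq_norm, Real.coe_toNNReal _ hC, ← hs u, ← hs v]
    exact h _ (hsA u) _ (hsA v)
  have himg : g '' A ⊆ F '' Set.univ := by
    rintro _ ⟨i, hi, rfl⟩
    refine ⟨⟨f i, i, hi, rfl⟩, trivial, ?_⟩
    have h0 := h _ (hsA ⟨f i, i, hi, rfl⟩) _ hi
    rw [hs ⟨f i, i, hi, rfl⟩, sub_self, norm_zero, mul_zero] at h0
    exact sub_eq_zero.1 (norm_le_zero_iff.1 h0)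
  refine measure_mono_null himg (hac₁ ?_)
  have hle := hF.hausdorffMeasure_image_le
    (d := (Module.finrank ℝ (Ed d) : ℝ)) (Nat.cast_nonneg _) Set.univ
  have huniv : μH[Module.finrank ℝ (Ed d)] (Set.univ : Set (f '' A)) = 0 := by
    rw [← isometry_subtype_coe.hausdorffMeasure_image (Or.inl (Nat.cast_nonneg _)),
      Set.image_univ, Subtype.range_coe]
    exact hac₂ hf
  rw [huniv, mul_zero] at hle
  exact le_antisymm hle zero_le

/-- absolute continuity of the WROF solution. For `Ω ⊂ ℝ^d` compact
convex with non-empty interior, `λ > 0`, and `μ, ν ∈ 𝒫(Ω)` both absolutely continuous with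
respect to Lebesgue measure, the unique solution `ρ_λ` of the WROF problem is absolutely
continuous with respect to Lebesgue measure. -/
theorem stmt13 (d : ℕ) (Ω : Set (Ed d)) (hΩc : IsCompact Ω) (hΩconv : Convex ℝ Ω)
    (hΩint : (interior Ω).Nonempty)
    (lam : ℝ) (hlam : 0 < lam)
    (μ ν : Measure (Ed d)) (hμ : ProbOn Ω μ) (hν : ProbOn Ω ν)
    (hμac : μ ≪ (volume : Measure (Ed d))) (hνac : ν ≪ (volume : Measure (Ed d)))
    (ρlam : Measure (Ed d)) (hρP : ProbOn Ω ρlam)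
    (hρmin : ∀ ρ, ProbOn Ω ρ → wrof lam μ ν ρlam ≤ wrof lam μ ν ρ) :
    ρlam ≪ (volume : Measure (Ed d)) := by
  have := hμ.1
  have := hν.1
  have := hρP.1
  obtain ⟨γ₁, hγ₁, ho₁⟩ := exists_optimal hΩc (c := fun x y => ‖x - y‖ ^ 2) (by fun_prop) hμ hρP
  obtain ⟨γ₂, hγ₂, ho₂⟩ := exists_optimal hΩc (c := fun x y => ‖x - y‖) (by fun_prop) hρP hν
  have := hγ₁.isProbabilityMeasure
  have := hγ₂.isProbabilityMeasure
  obtain ⟨π, hπ, hπ₁, hπ₂⟩ := exists_glue hγ₁ hγ₂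
  have m1 : Measurable fun t : Triple d => (t.2.1, t.1) := by fun_prop
  have m2 : Measurable fun t : Triple d => (t.1, t.2.2) := by fun_prop
  have hx : π.map (fun t => t.2.1) = μ := by
    rw [← hγ₁.1, ← hπ₁, Measure.map_map measurable_fst m1]; rfl
  have hz : π.map (fun t => t.1) = ρlam := by
    rw [← hγ₁.2, ← hπ₁, Measure.map_map measurable_snd m1]; rfl
  have hy : π.map (fun t => t.2.2) = ν := by
    rw [← hγ₂.2, ← hπ₂, Measure.map_map measurable_snd m2]; rfl
  have hmem : ∀ᵐ t ∂π, t ∈ Ω ×ˢ Ω ×ˢ Ω := by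
    filter_upwards [ae_mem_of_map (f := fun t : Triple d => t.1) (by fun_prop) hz hρP,
      ae_mem_of_map (f := fun t : Triple d => t.2.1) (by fun_prop) hx hμ,
      ae_mem_of_map (f := fun t : Triple d => t.2.2) (by fun_prop) hy hν]
      with t h1 h2 h3 using ⟨h1, h2, h3⟩
  have hK : IsCompact (Ω ×ˢ Ω ×ˢ Ω) := hΩc.prod (hΩc.prod hΩc)
  have hval : ∫ t, viaCost lam t.1 t.2.1 t.2.2 ∂π = wrof lam μ ν ρlam := by
    unfold viaCost
    rw [integral_add (integrable_of_compact hK hmem (by fun_prop))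
      (integrable_of_compact hK hmem (by fun_prop)), integral_div, integral_const_mul]
    unfold wrof W2sq W1
    rw [← ho₁, ← ho₂, ← hπ₁, ← hπ₂,
      integral_map m1.aemeasurable (Continuous.aestronglyMeasurable (by fun_prop)),
      integral_map m2.aemeasurable (Continuous.aestronglyMeasurable (by fun_prop))]
  have hnull := swap_null hΩc hΩconv (lam := lam) hμ hν hx hy (by rw [hz]; exact hρP)
    (fun θ hθ hθx hθy hθz => hval.le.trans
      ((hρmin _ hθz).trans (wrof_le_of_triple hΩc hlam hμ hν hθx hθy hθz)))
  refine Measure.AbsolutelyContinuous.mk fun N hN hN0 => ?_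
  have mz : Measurable fun t : Triple d => t.1 := by fun_prop
  have my : Measurable fun t : Triple d => t.2.2 := by fun_prop
  have mx : Measurable fun t : Triple d => t.2.1 := by fun_prop
  let A : ℕ → Set (Triple d) := fun n =>
    {t | t ∈ π.support ∧ t.1 ∈ N ∧ 1 / ((n : ℝ) + 1) ≤ ‖t.1 - t.2.2‖}
  rw [← hz, Measure.map_apply mz hN]
  have hcover : (fun t : Triple d => t.1) ⁻¹' N ⊆
      π.supportᶜ ∪ ((fun t : Triple d => t.2.2) ⁻¹' N ∪ ⋃ n, A n) := by
    intro t ht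
    by_cases hs : t ∈ π.support
    · right
      by_cases hzy : t.1 = t.2.2
      · left
        change t.2.2 ∈ N
        rw [← hzy]
        exact ht
      · right
        obtain ⟨n, hn⟩ := exists_nat_one_div_lt (norm_pos_iff.2 (sub_ne_zero.2 hzy))
        exact Set.mem_iUnion.2 ⟨n, hs, ht, hn.le⟩
    · exact Or.inl hs
  refine measure_mono_null hcover (measure_union_null Measure.measure_compl_support
    (measure_union_null ?_ (measure_iUnion_null fun n => ?_)))
  · rw [← Measure.map_apply my hN, hy]
    exact hνac hN0
  · have hε : (0 : ℝ) < 1 / ((n : ℝ) + 1) := by positivity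
    have hvol : (volume : Measure (Ed d)) ((fun t : Triple d => t.2.1) '' A n) = 0 := by
      refine volume_eq_zero_of_lipschitz (f := fun t : Triple d => t.1)
        (C := 2 * (lam / (1 / ((n : ℝ) + 1)) + 1 / 2) + 1) (by positivity) ?_ ?_
      · intro t ht t' ht'
        refine dist_source_le (y' := t'.2.2) hlam hε ht.2.2 (fun w => ?_) (fun w => ?_)
        -- the exchange inequality for a triple paired with itself
        · have := viaCost_le_of_mem_support hlam hnull ht.1 ht.1 w w
          linarith
        · exact viaCost_le_of_mem_support hlam hnull ht.1 ht'.1 t'.1 w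
      · refine measure_mono_null ?_ hN0
        rintro _ ⟨t, ht, rfl⟩
        exact ht.2.1
    have hμ0 := hμac hvol
    rw [← hx] at hμ0
    exact measure_mono_null (Set.subset_preimage_image _ _)
      (le_antisymm ((Measure.le_map_apply mx.aemeasurable _).trans hμ0.le) zero_le)
end
end

section
/- Let Ω ⊂ ℝ^d be compact and convex with non-negligible interior, μ, ν ∈ 𝒫(Ω) with μ absolutely continuous, λ > 0. Let γ₀ be an optimal plan for the transport of μ to ν under the Huber cost c_{2,λ}, set μ^a = (π_x)_# γ₀|_{{|x−y| ≤ λ}}, and let T_λ be a Borel map μ-a.e. equal to I − ∇φ_λ^{c₂} for φ_λ a solution of sup_{φ ∈ λ-Lip(Ω)} ∫φ^{c₂}dμ + ∫φ dν. Then ρ^a_λ := (T_λ)_# μ^a satisfies ρ^a_λ(E) ≤ ν(E) for every Borel set E ⊂ Ω. In particular, if ν is absolutely continuous with respect to Lebesgue measure, so is ρ^a_λ. -/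
/-!
The heart of the matter is that the optimal plan `γ₀`, restricted to pairs at distance at most `λ`,
is carried by the graph of `T_λ`. Then `ρ^a_λ` is the second marginal of that restriction, hence
bounded by the second marginal `ν` of `γ₀`.

*No duality gap* (`exists_dual_near`). On `C(Ω × Ω)` consider the sublinear functional
`u ↦ inf {∫ f dμ + ∫ g dν : u ≤ f ⊕ g}`. By Hahn–Banach there is a linear functional below it that
agrees with it at `-c`; it is positive and has marginals `μ` and `ν`, so by Riesz–Markov–Kakutani it
is integration against a coupling whose cost is the dual supremum. The cost of `γ₀` is therefore at
most that supremum.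

*The dual solution attains the cost* (`cost_le_dual`). For a near-optimal pair `(f, g)`, the
Huber transform `ψ` of `f` is `λ`-Lipschitz, because the Huber cost is, and satisfies `g ≤ ψ` and
`f ≤ ψ^{c₂}` on `Ω`. As `φ_λ` beats every such `ψ`, its dual value is at least the cost of `γ₀`.

*Contact* (`ae_contact`, `gradient_ctrans_c2`). Convexity of `Ω` gives
`φ_λ^{c₂}(x) + φ_λ(y) ≤ c_{2,λ}(x, y)` on `Ω × Ω`, so equality holds `γ₀`-almost everywhere. Where
`|x - y| ≤ λ` the right side is `c₂(x, y)`, and `x` minimizes `x' ↦ c₂(x', y) - φ_λ^{c₂}(x')`. Since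
`φ_λ^{c₂}` is locally Lipschitz and `μ` is absolutely continuous, Rademacher's theorem lets one
differentiate: `y = x - ∇φ_λ^{c₂}(x) = T_λ(x)`.
-/

open MeasureTheory Filter Topology

noncomputable section

variable {d : ℕ}

open scoped BoundedContinuousFunction CompactlySupported

/-! ### Kantorovich duality without attainment -/

/-- The values `∫ f dμ + ∫ g dν` over pairs of bounded continuous functions with
`u(x, y) ≤ f x + g y` on `Ω × Ω`. -/
def upperVals (Ω : Set (Ed d)) (μ ν : Measure (Ed d)) (u : C(Ω × Ω, ℝ)) : Set ℝ :=
  {r | ∃ f g : Ed d →ᵇ ℝ, (∀ p : Ω × Ω, u p ≤ f p.1 + g p.2) ∧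
    r = (∫ x, f x ∂μ) + ∫ y, g y ∂ν}

/-- The sublinear functional `u ↦ inf {∫ f dμ + ∫ g dν : u ≤ f ⊕ g on Ω × Ω}` to which the
Hahn–Banach theorem is applied. -/
def upperFun (Ω : Set (Ed d)) (μ ν : Measure (Ed d)) (u : C(Ω × Ω, ℝ)) : ℝ :=
  sInf (upperVals Ω μ ν u)

lemma ae_mem_of_probOn {Ω : Set (Ed d)} {μ : Measure (Ed d)} (hμ : ProbOn Ω μ) :
    ∀ᵐ x ∂μ, x ∈ Ω := hμ.2

lemma upperVals_lower_bound {Ω : Set (Ed d)} {μ ν : Measure (Ed d)}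
    (hμ : ProbOn Ω μ) (hν : ProbOn Ω ν) {u : C(Ω × Ω, ℝ)} {m : ℝ} (hm : ∀ p, m ≤ u p)
    {r : ℝ} (hr : r ∈ upperVals Ω μ ν u) : m ≤ r := by
  obtain ⟨f, g, hfg, rfl⟩ := hr
  have := hμ.1
  have := hν.1
  have h1 : ∀ x ∈ Ω, m - f x ≤ ∫ y, g y ∂ν := by
    intro x hx
    have : ∫ y, (m - f x) ∂ν ≤ ∫ y, g y ∂ν := by
      refine integral_mono_ae (integrable_const _) (g.integrable ν) ?_
      filter_upwards [ae_mem_of_probOn hν] with y hy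
      have := hfg (⟨x, hx⟩, ⟨y, hy⟩)
      have := hm (⟨x, hx⟩, ⟨y, hy⟩)
      simp at *
      linarith
    simpa using this
  have h2 : ∫ x, (m - ∫ y, g y ∂ν) ∂μ ≤ ∫ x, f x ∂μ := by
    refine integral_mono_ae (integrable_const _) (f.integrable μ) ?_
    filter_upwards [ae_mem_of_probOn hμ] with x hx
    have := h1 x hx
    linarith
  simp at h2
  linarith

section

variable {Ω : Set (Ed d)} {μ ν : Measure (Ed d)}

lemma upperVals_bddBelow (hΩc : IsCompact Ω) (hμ : ProbOn Ω μ) (hν : ProbOn Ω ν)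
    (u : C(Ω × Ω, ℝ)) : BddBelow (upperVals Ω μ ν u) := by
  have : CompactSpace Ω := isCompact_iff_compactSpace.1 hΩc
  refine ⟨-‖u‖, fun r hr => upperVals_lower_bound hμ hν (u := u) (fun p => ?_) hr⟩
  exact (abs_le.1 (u.norm_coe_le_norm p)).1

lemma upperVals_nonempty (hΩc : IsCompact Ω) (u : C(Ω × Ω, ℝ)) :
    (upperVals Ω μ ν u).Nonempty := by
  have : CompactSpace Ω := isCompact_iff_compactSpace.1 hΩc
  refine ⟨_, BoundedContinuousFunction.const _ ‖u‖, 0, fun p => ?_, rfl⟩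
  simpa using (abs_le.1 (u.norm_coe_le_norm p)).2

lemma upperFun_le (hΩc : IsCompact Ω) (hμ : ProbOn Ω μ) (hν : ProbOn Ω ν)
    {u : C(Ω × Ω, ℝ)} (f g : Ed d →ᵇ ℝ) (h : ∀ p : Ω × Ω, u p ≤ f p.1 + g p.2) :
    upperFun Ω μ ν u ≤ (∫ x, f x ∂μ) + ∫ y, g y ∂ν :=
  csInf_le (upperVals_bddBelow hΩc hμ hν u) ⟨f, g, h, rfl⟩

lemma upperFun_exists_lt (hΩc : IsCompact Ω) (u : C(Ω × Ω, ℝ)) {ε : ℝ} (hε : 0 < ε) :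
    ∃ f g : Ed d →ᵇ ℝ, (∀ p : Ω × Ω, u p ≤ f p.1 + g p.2) ∧
      (∫ x, f x ∂μ) + ∫ y, g y ∂ν < upperFun Ω μ ν u + ε := by
  obtain ⟨r, ⟨f, g, h, rfl⟩, hr⟩ := exists_lt_of_csInf_lt (upperVals_nonempty hΩc u (μ := μ)
    (ν := ν)) (show upperFun Ω μ ν u < upperFun Ω μ ν u + ε by linarith)
  exact ⟨f, g, h, hr⟩

lemma upperFun_add (hΩc : IsCompact Ω) (hμ : ProbOn Ω μ) (hν : ProbOn Ω ν)
    (u v : C(Ω × Ω, ℝ)) :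
    upperFun Ω μ ν (u + v) ≤ upperFun Ω μ ν u + upperFun Ω μ ν v := by
  have := hμ.1
  have := hν.1
  refine le_of_forall_pos_le_add fun ε hε => ?_
  obtain ⟨f, g, h, hlt⟩ := upperFun_exists_lt (μ := μ) (ν := ν) hΩc u (half_pos hε)
  obtain ⟨f', g', h', hlt'⟩ := upperFun_exists_lt (μ := μ) (ν := ν) hΩc v (half_pos hε)
  have key := upperFun_le (u := u + v) hΩc hμ hν (f + f') (g + g') (fun p => by
    have := h p
    have := h' p
    simp
    linarith)
  simp only [BoundedContinuousFunction.coe_add, Pi.add_apply] at key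
  rw [integral_add (f.integrable μ) (f'.integrable μ),
    integral_add (g.integrable ν) (g'.integrable ν)] at key
  linarith

lemma upperFun_smul_le (hΩc : IsCompact Ω) (hμ : ProbOn Ω μ) (hν : ProbOn Ω ν)
    {t : ℝ} (ht : 0 < t) (u : C(Ω × Ω, ℝ)) :
    upperFun Ω μ ν (t • u) ≤ t * upperFun Ω μ ν u := by
  refine le_of_forall_pos_le_add fun ε hε => ?_
  obtain ⟨f, g, h, hlt⟩ := upperFun_exists_lt (μ := μ) (ν := ν) hΩc u (div_pos hε ht)
  have key := upperFun_le (u := t • u) hΩc hμ hν (t • f) (t • g) (fun p => by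
    have := mul_le_mul_of_nonneg_left (h p) ht.le
    simp
    linarith)
  simp only [BoundedContinuousFunction.coe_smul, smul_eq_mul, integral_const_mul] at key
  have := mul_lt_mul_of_pos_left hlt ht
  have h3 : t * (ε / t) = ε := by field_simp
  rw [mul_add, mul_add, h3] at this
  linarith

lemma upperFun_smul (hΩc : IsCompact Ω) (hμ : ProbOn Ω μ) (hν : ProbOn Ω ν)
    (t : ℝ) (ht : 0 < t) (u : C(Ω × Ω, ℝ)) :
    upperFun Ω μ ν (t • u) = t * upperFun Ω μ ν u := by
  refine le_antisymm (upperFun_smul_le hΩc hμ hν ht u) ?_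
  have := upperFun_smul_le hΩc hμ hν (inv_pos.2 ht) (t • u)
  rw [inv_smul_smul₀ ht.ne'] at this
  have := mul_le_mul_of_nonneg_left this ht.le
  rwa [mul_inv_cancel_left₀ ht.ne'] at this

/-- Hahn–Banach: a linear functional dominated by `upperFun` and agreeing with it at `u`. -/
lemma exists_functional (hΩc : IsCompact Ω) (hμ : ProbOn Ω μ) (hν : ProbOn Ω ν)
    (u : C(Ω × Ω, ℝ)) : ∃ L : C(Ω × Ω, ℝ) →ₗ[ℝ] ℝ,
      L u = upperFun Ω μ ν u ∧ ∀ v, L v ≤ upperFun Ω μ ν v := by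
  have h0 : upperFun Ω μ ν 0 = 0 := by
    have := upperFun_smul hΩc hμ hν 2 two_pos 0
    rw [smul_zero] at this
    linarith
  have H : ∀ t : ℝ, t • u = 0 → (RingHom.id ℝ) t • upperFun Ω μ ν u = 0 := by
    intro t ht
    rcases smul_eq_zero.1 ht with h | h
    · simp [h]
    · simp [h, h0]
  obtain ⟨L, hL, hLe⟩ := exists_extension_of_le_sublinear
    (LinearPMap.mkSpanSingleton' u (upperFun Ω μ ν u) H) (upperFun Ω μ ν)
    (upperFun_smul hΩc hμ hν) (upperFun_add hΩc hμ hν) (by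
      rintro ⟨v, hv⟩
      obtain ⟨t, rfl⟩ := Submodule.mem_span_singleton.1 hv
      rw [LinearPMap.mkSpanSingleton'_apply]
      simp only [RingHom.id_apply, smul_eq_mul]
      rcases lt_trichotomy t 0 with ht | rfl | ht
      · have h1 := upperFun_add hΩc hμ hν (t • u) ((-t) • u)
        rw [upperFun_smul hΩc hμ hν (-t) (by linarith) u, neg_smul, add_neg_cancel, h0] at h1
        linarith
      · simp [h0]
      · exact (upperFun_smul hΩc hμ hν t ht u).ge)
  refine ⟨L, ?_, hLe⟩
  exact (hL ⟨u, Submodule.mem_span_singleton_self u⟩).trans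
    (LinearPMap.mkSpanSingleton'_apply_self u _ H _)

/-- By Riesz–Markov–Kakutani, the Hahn–Banach functional is integration against a coupling, so
some coupling attains the dual value. -/
lemma exists_coupling_eq_upperFun (hΩc : IsCompact Ω) (hμ : ProbOn Ω μ) (hν : ProbOn Ω ν)
    (c : Ed d × Ed d → ℝ) (hc : Continuous c) (u : C(Ω × Ω, ℝ))
    (hu : ∀ p : Ω × Ω, u p = c (p.1, p.2)) :
    ∃ γ : Measure (Ed d × Ed d), IsCoupling μ ν γ ∧ ∫ p, c p ∂γ = upperFun Ω μ ν u := by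
  have := hμ.1
  have := hν.1
  have : CompactSpace Ω := isCompact_iff_compactSpace.1 hΩc
  obtain ⟨L, hLu, hLe⟩ := exists_functional hΩc hμ hν u
  have hpos : ∀ v : C(Ω × Ω, ℝ), (∀ p, 0 ≤ v p) → 0 ≤ L v := by
    intro v hv
    have h1 := hLe (-v)
    have h2 := upperFun_le (u := -v) hΩc hμ hν 0 0 (fun p => by simpa using hv p)
    simp at h1 h2
    linarith
  let Λ : C_c(Ω × Ω, ℝ) →ₚ[ℝ] ℝ := PositiveLinearMap.mk₀
    { toFun := fun f => L f.toContinuousMap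
      map_add' := fun f g => L.map_add f.toContinuousMap g.toContinuousMap
      map_smul' := fun t f => L.map_smul t f.toContinuousMap }
    (fun f hf => hpos f.toContinuousMap (fun p => hf p))
  have hΛ : ∀ v : C(Ω × Ω, ℝ), ∫ p, v p ∂(RealRMK.rieszMeasure Λ) = L v := fun v =>
    RealRMK.integral_rieszMeasure Λ (CompactlySupportedContinuousMap.continuousMapEquiv v)
  have hm : Measurable (fun p : Ω × Ω => ((p.1 : Ed d), (p.2 : Ed d))) := by fun_prop
  have hfst : ∀ f : Ed d →ᵇ ℝ,
      L ⟨fun p : Ω × Ω => f p.1, by fun_prop⟩ = ∫ x, f x ∂μ := by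
    intro f
    have h1 := (hLe ⟨fun p : Ω × Ω => f p.1, by fun_prop⟩).trans
      (upperFun_le hΩc hμ hν f 0 (fun p => by simp))
    have h2 := (hLe (-⟨fun p : Ω × Ω => f p.1, by fun_prop⟩)).trans
      (upperFun_le hΩc hμ hν (-f) 0 (fun p => by simp))
    rw [map_neg] at h2
    simp [integral_neg] at h1 h2
    linarith
  have hsnd : ∀ f : Ed d →ᵇ ℝ,
      L ⟨fun p : Ω × Ω => f p.2, by fun_prop⟩ = ∫ x, f x ∂ν := by
    intro f
    have h1 := (hLe ⟨fun p : Ω × Ω => f p.2, by fun_prop⟩).trans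
      (upperFun_le hΩc hμ hν 0 f (fun p => by simp))
    have h2 := (hLe (-⟨fun p : Ω × Ω => f p.2, by fun_prop⟩)).trans
      (upperFun_le hΩc hμ hν 0 (-f) (fun p => by simp))
    rw [map_neg] at h2
    simp [integral_neg] at h1 h2
    linarith
  refine ⟨(RealRMK.rieszMeasure Λ).map (fun p : Ω × Ω => ((p.1 : Ed d), (p.2 : Ed d))),
    ⟨?_, ?_⟩, ?_⟩
  · rw [Measure.map_map measurable_fst hm]
    refine ext_of_forall_integral_eq_of_IsFiniteMeasure fun f => ?_
    rw [integral_map (by fun_prop) (by fun_prop), ← hfst f]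
    exact hΛ ⟨fun p : Ω × Ω => f p.1, by fun_prop⟩
  · rw [Measure.map_map measurable_snd hm]
    refine ext_of_forall_integral_eq_of_IsFiniteMeasure fun f => ?_
    rw [integral_map (by fun_prop) (by fun_prop), ← hsnd f]
    exact hΛ ⟨fun p : Ω × Ω => f p.2, by fun_prop⟩
  · rw [integral_map (by fun_prop) (by fun_prop), ← hLu, ← hΛ u]
    simp only [hu]

/-- Absence of a duality gap: the dual problem comes arbitrarily close to the cost of an
optimal plan. -/
lemma exists_dual_near (hΩc : IsCompact Ω) (hμ : ProbOn Ω μ) (hν : ProbOn Ω ν)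
    (c : Ed d → Ed d → ℝ) (hc : Continuous (fun p : Ed d × Ed d => c p.1 p.2))
    {γ₀ : Measure (Ed d × Ed d)} (hγ : IsOptimalPlan c μ ν γ₀) {ε : ℝ} (hε : 0 < ε) :
    ∃ f g : Ed d →ᵇ ℝ, (∀ x ∈ Ω, ∀ y ∈ Ω, f x + g y ≤ c x y) ∧
      ∫ p, c p.1 p.2 ∂γ₀ - ε ≤ (∫ x, f x ∂μ) + ∫ y, g y ∂ν := by
  -- The sublinear functional is an upper envelope, so it is evaluated at `-c`.
  let u : C(Ω × Ω, ℝ) := ⟨fun p => -c p.1 p.2,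
    (hc.comp (f := fun p : Ω × Ω => ((p.1 : Ed d), (p.2 : Ed d))) (by fun_prop)).neg⟩
  obtain ⟨γ, hγc, hγu⟩ := exists_coupling_eq_upperFun hΩc hμ hν (fun p => -c p.1 p.2) hc.neg u
    (fun p => rfl)
  obtain ⟨f, g, h, hlt⟩ := upperFun_exists_lt (μ := μ) (ν := ν) hΩc u hε
  have h1 := hγ.2 γ hγc
  rw [integral_neg] at hγu
  refine ⟨-f, -g, fun x hx y hy => ?_, ?_⟩
  · have : -c x y ≤ f x + g y := h (⟨x, hx⟩, ⟨y, hy⟩)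
    simp
    linarith
  · simp only [BoundedContinuousFunction.coe_neg, Pi.neg_apply, integral_neg]
    linarith

end

/-! ### The Huber cost -/

lemma huber_comm (lam : ℝ) (x y : Ed d) : huber lam x y = huber lam y x := by
  simp only [huber, norm_sub_rev x y]

lemma huber_le_c2 (lam : ℝ) (x y : Ed d) : huber lam x y ≤ c2 x y := by
  unfold huber c2
  split_ifs
  · exact le_rfl
  · nlinarith [sq_nonneg (‖x - y‖ - lam)]

lemma huber_nonneg {lam : ℝ} (hlam : 0 < lam) (x y : Ed d) : 0 ≤ huber lam x y := by
  unfold huber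
  split_ifs with h
  · positivity
  · push Not at h
    nlinarith

lemma continuous_huber (lam : ℝ) :
    Continuous (fun p : Ed d × Ed d => huber lam p.1 p.2) := by
  unfold huber
  refine Continuous.if_le (by fun_prop) (by fun_prop) (by fun_prop) (by fun_prop) ?_
  intro p hp
  rw [hp]
  ring

lemma huber_lipschitz {lam : ℝ} (hlam : 0 < lam) (x x' y : Ed d) :
    huber lam x y ≤ huber lam x' y + lam * ‖x - x'‖ := by
  have h1 : ‖x - y‖ ≤ ‖x - x'‖ + ‖x' - y‖ := norm_sub_le_norm_sub_add_norm_sub x x' y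
  have h0 := norm_nonneg (x - y)
  have h0' := norm_nonneg (x' - y)
  have h0'' := norm_nonneg (x - x')
  have h2 := mul_le_mul_of_nonneg_left h1 hlam.le
  unfold huber
  split_ifs with h h' h'
  · rcases le_total ‖x - y‖ ‖x' - y‖ with hr | hr
    · nlinarith
    -- The slope `(r + s) / 2` between radii `r, s ≤ lam` is at most `lam`.
    · nlinarith [mul_nonneg (sub_nonneg.2 hr) (show 0 ≤ 2 * lam - ‖x - y‖ - ‖x' - y‖ by linarith)]
  · nlinarith [sq_nonneg (‖x - y‖ - lam)]
  · nlinarith [sq_nonneg (‖x' - y‖ - lam)]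
  · nlinarith

/-! ### The `c`-transform -/

section

variable {Ω : Set (Ed d)}

lemma ctrans_le {c : Ed d → Ed d → ℝ} {φ : Ed d → ℝ} {x y : Ed d} {M : ℝ}
    (hc : ∀ y, 0 ≤ c x y) (hM : ∀ y ∈ Ω, φ y ≤ M) (hy : y ∈ Ω) :
    ctrans c Ω φ x ≤ c x y - φ y := by
  refine csInf_le ⟨-M, ?_⟩ ⟨y, hy, rfl⟩
  rintro _ ⟨z, hz, rfl⟩
  have := hc z
  have := hM z hz
  simp only
  linarith

lemma le_ctrans {c : Ed d → Ed d → ℝ} {φ : Ed d → ℝ} {x : Ed d} {m : ℝ}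
    (hne : Ω.Nonempty) (h : ∀ y ∈ Ω, m ≤ c x y - φ y) : m ≤ ctrans c Ω φ x := by
  refine le_csInf (hne.image _) ?_
  rintro _ ⟨z, hz, rfl⟩
  exact h z hz

/-- A `c`-transform inherits the modulus of continuity of `c` in its first variable. -/
lemma ctrans_lipschitzOn {c : Ed d → Ed d → ℝ} {φ : Ed d → ℝ} {S : Set (Ed d)} {M K : ℝ}
    (hK : 0 ≤ K) (hne : Ω.Nonempty) (hc : ∀ x y, 0 ≤ c x y) (hM : ∀ y ∈ Ω, φ y ≤ M)
    (hL : ∀ x ∈ S, ∀ x' ∈ S, ∀ y ∈ Ω, c x y ≤ c x' y + K * ‖x - x'‖) :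
    LipschitzOnWith K.toNNReal (ctrans c Ω φ) S := by
  refine LipschitzOnWith.of_le_add_mul _ fun x hx x' hx' => ?_
  rw [Real.coe_toNNReal _ hK, dist_eq_norm, ← sub_le_iff_le_add]
  refine le_ctrans hne fun y hy => ?_
  have := ctrans_le (hc x) hM hy
  have := hL x hx x' hx' y hy
  linarith

lemma c2_nonneg (x y : Ed d) : 0 ≤ c2 x y := by
  unfold c2
  positivity

lemma ctrans_c2_lipschitzOn_ball (hΩc : IsCompact Ω) (hne : Ω.Nonempty) {φ : Ed d → ℝ} {M : ℝ}
    (hM : ∀ y ∈ Ω, φ y ≤ M) (r : ℝ) :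
    ∃ K, LipschitzOnWith K (ctrans c2 Ω φ) (Metric.ball 0 r) := by
  obtain ⟨R, hR⟩ := hΩc.isBounded.exists_norm_le
  have hR0 : 0 ≤ R := by
    obtain ⟨y, hy⟩ := hne
    exact (norm_nonneg y).trans (hR y hy)
  refine ⟨_, ctrans_lipschitzOn (K := |r| + R) (by positivity) hne c2_nonneg hM ?_⟩
  intro x hx x' hx' y hy
  rw [mem_ball_zero_iff] at hx hx'
  have h1 : ‖x - y‖ ≤ ‖x - x'‖ + ‖x' - y‖ := norm_sub_le_norm_sub_add_norm_sub x x' y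
  have h2 : ‖x - y‖ ≤ |r| + R := (norm_sub_le x y).trans
    (add_le_add (hx.le.trans (le_abs_self r)) (hR y hy))
  have h3 : ‖x' - y‖ ≤ |r| + R := (norm_sub_le x' y).trans
    (add_le_add (hx'.le.trans (le_abs_self r)) (hR y hy))
  have h0 := norm_nonneg (x - y)
  have h0' := norm_nonneg (x' - y)
  have h0'' := norm_nonneg (x - x')
  unfold c2
  nlinarith [mul_nonneg h0'' (sub_nonneg.2 h2), mul_nonneg h0'' (sub_nonneg.2 h3),
    mul_nonneg (sub_nonneg.2 h1) (add_nonneg h0 h0')]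

lemma continuous_ctrans_c2 (hΩc : IsCompact Ω) (hne : Ω.Nonempty) {φ : Ed d → ℝ} {M : ℝ}
    (hM : ∀ y ∈ Ω, φ y ≤ M) : Continuous (ctrans c2 Ω φ) := by
  rw [continuous_iff_continuousAt]
  intro x
  obtain ⟨K, hK⟩ := ctrans_c2_lipschitzOn_ball hΩc hne hM (‖x‖ + 1)
  exact hK.continuousOn.continuousAt (Metric.isOpen_ball.mem_nhds (by simp))

lemma ae_differentiableAt_ctrans_c2 (hΩc : IsCompact Ω) (hne : Ω.Nonempty) {φ : Ed d → ℝ} {M : ℝ}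
    (hM : ∀ y ∈ Ω, φ y ≤ M) :
    ∀ᵐ x ∂(volume : Measure (Ed d)), DifferentiableAt ℝ (ctrans c2 Ω φ) x := by
  have h : ∀ n : ℕ, ∀ᵐ x ∂(volume : Measure (Ed d)), x ∈ Metric.ball (0 : Ed d) n →
      DifferentiableWithinAt ℝ (ctrans c2 Ω φ) (Metric.ball 0 n) x := by
    intro n
    obtain ⟨K, hK⟩ := ctrans_c2_lipschitzOn_ball hΩc hne hM n
    exact hK.ae_differentiableWithinAt_of_mem
  filter_upwards [ae_all_iff.2 h] with x hx
  obtain ⟨n, hn⟩ := exists_nat_gt ‖x‖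
  have hxn : x ∈ Metric.ball (0 : Ed d) n := by simpa using hn
  exact (hx n hxn).differentiableAt (Metric.isOpen_ball.mem_nhds hxn)

/-- If `(x, y)` is a contact point of `φ^{c₂} ⊕ φ ≤ c₂`, then `x` minimizes
`x' ↦ c₂(x', y) - φ^{c₂}(x')`, so the gradient there vanishes. -/
lemma gradient_ctrans_c2 {φ : Ed d → ℝ} {M : ℝ} (hM : ∀ y ∈ Ω, φ y ≤ M) {x y : Ed d}
    (hy : y ∈ Ω) (heq : ctrans c2 Ω φ x + φ y = c2 x y)
    (hd : DifferentiableAt ℝ (ctrans c2 Ω φ) x) :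
    gradient (ctrans c2 Ω φ) x = x - y := by
  have hmin : IsLocalMin (fun x' => c2 x' y - ctrans c2 Ω φ x') x := by
    refine Filter.Eventually.of_forall fun x' => ?_
    have := ctrans_le (c2_nonneg x') hM hy
    simp only
    linarith
  have h1 : HasFDerivAt (fun x' : Ed d => c2 x' y) (innerSL ℝ (x - y)) x := by
    have := (((hasFDerivAt_id x).sub_const y).norm_sq).const_mul (1 / 2 : ℝ)
    have e1 : (fun x' : Ed d => c2 x' y) = fun x' => 1 / 2 * ‖id x' - y‖ ^ 2 := by
      ext x'
      simp only [c2, id]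
      ring
    rw [e1]
    refine this.congr_fderiv ?_
    ext v
    simp
  have h2 := hmin.hasFDerivAt_eq_zero (h1.sub hd.hasGradientAt.hasFDerivAt)
  refine ext_inner_right ℝ fun v => ?_
  have h3 := DFunLike.congr_fun h2 v
  simp only [sub_apply, zero_apply, innerSL_apply_apply,
    InnerProductSpace.toDual_apply_apply] at h3
  linarith

/-- A `λ`-Lipschitz potential is admissible for the Huber cost: when `|x - y| > λ`, pass through
the point of the segment `[x, y]` at distance `λ` from `x`. -/
lemma ctrans_c2_add_le_huber (hΩconv : Convex ℝ Ω) {lam : ℝ} (hlam : 0 < lam) {φ : Ed d → ℝ}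
    (hφ : LipschitzOnWith lam.toNNReal φ Ω) {M : ℝ} (hM : ∀ y ∈ Ω, φ y ≤ M) {x y : Ed d}
    (hx : x ∈ Ω) (hy : y ∈ Ω) : ctrans c2 Ω φ x + φ y ≤ huber lam x y := by
  unfold huber
  split_ifs with h
  · have := ctrans_le (c2_nonneg x) hM hy
    unfold c2 at *
    linarith
  · push Not at h
    have hr : 0 < ‖x - y‖ := hlam.trans h
    have hle : lam / ‖x - y‖ ≤ 1 := (div_le_one hr).2 h.le
    have h0 : 0 ≤ lam / ‖x - y‖ := by positivity
    set t := lam / ‖x - y‖ with ht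
    have htr : t * ‖x - y‖ = lam := by rw [ht]; field_simp
    have hz : x + t • (y - x) ∈ Ω := hΩconv.add_smul_sub_mem hx hy ⟨h0, hle⟩
    have h1 := ctrans_le (c2_nonneg x) hM hz
    have h2 := hφ.dist_le_mul y hy _ hz
    have e1 : x - (x + t • (y - x)) = t • (x - y) := by module
    have e2 : y - (x + t • (y - x)) = -((1 - t) • (x - y)) := by module
    rw [dist_eq_norm, dist_eq_norm, e2, norm_neg, norm_smul, Real.coe_toNNReal _ hlam.le,
      Real.norm_eq_abs, Real.norm_eq_abs, abs_of_nonneg (by linarith : 0 ≤ 1 - t)] at h2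
    have h3 := (le_abs_self _).trans h2
    have hc : c2 x (x + t • (y - x)) = ‖x - (x + t • (y - x))‖ ^ 2 / 2 := rfl
    rw [hc, e1, norm_smul, Real.norm_eq_abs, abs_of_nonneg h0, htr] at h1
    have h4 : (1 - t) * ‖x - y‖ = ‖x - y‖ - lam := by linarith
    rw [h4] at h3
    nlinarith

end

/-! ### Optimality of the dual solution and contact points -/

lemma integrable_of_continuousOn {X : Type*} [TopologicalSpace X] [T2Space X]
    [SecondCountableTopology X] [TopologicalSpace.PseudoMetrizableSpace X]
    [MeasurableSpace X] [BorelSpace X] {m : Measure X}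
    [IsFiniteMeasure m] {K : Set X} (hK : IsCompact K) (hm : ∀ᵐ x ∂m, x ∈ K) {h : X → ℝ}
    (hh : ContinuousOn h K) : Integrable h m := by
  have := hh.integrableOn_compact (μ := m) hK
  rwa [IntegrableOn, Measure.restrict_eq_self_of_ae_mem hm] at this

section

variable {Ω : Set (Ed d)} {μ ν : Measure (Ed d)}

/-- The dual solution attains the Huber transport cost. Near-optimal continuous pairs `(f, g)` are
improved to the `λ`-Lipschitz competitor `ψ = f^{c_{2,λ}} ≥ g`, for which `ψ^{c₂} ≥ f`. -/
lemma cost_le_dual (hΩc : IsCompact Ω) (hne : Ω.Nonempty)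
    (hμ : ProbOn Ω μ) (hν : ProbOn Ω ν) {lam : ℝ} (hlam : 0 < lam)
    {γ₀ : Measure (Ed d × Ed d)} (hγ : IsOptimalPlan (huber lam) μ ν γ₀)
    {φ : Ed d → ℝ} (hφ : DualSol Ω lam μ ν φ) :
    ∫ p, huber lam p.1 p.2 ∂γ₀ ≤ (∫ x, ctrans c2 Ω φ x ∂μ) + ∫ x, φ x ∂ν := by
  have := hμ.1
  have := hν.1
  refine le_of_forall_pos_le_add fun ε hε => ?_
  obtain ⟨f, g, hfg, hval⟩ := exists_dual_near hΩc hμ hν (huber lam) (continuous_huber lam) hγ hε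
  have hf : ∀ y ∈ Ω, f y ≤ ‖f‖ := fun y _ => (le_abs_self _).trans (f.norm_coe_le_norm y)
  set ψ := ctrans (huber lam) Ω f with hψ
  have hlip : LipschitzOnWith lam.toNNReal ψ Ω :=
    ctrans_lipschitzOn hlam.le hne (huber_nonneg hlam) hf
      (fun x _ x' _ y _ => huber_lipschitz hlam x x' y)
  obtain ⟨M, hM⟩ := hΩc.exists_bound_of_continuousOn hlip.continuousOn
  have hM' : ∀ y ∈ Ω, ψ y ≤ M := fun y hy => (le_abs_self _).trans (hM y hy)
  have h1 : ∫ y, g y ∂ν ≤ ∫ y, ψ y ∂ν := by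
    refine integral_mono_ae (g.integrable ν)
      (integrable_of_continuousOn hΩc (ae_mem_of_probOn hν) hlip.continuousOn) ?_
    filter_upwards [ae_mem_of_probOn hν] with y hy
    refine le_ctrans hne fun x hx => ?_
    have := hfg x hx y hy
    rw [huber_comm]
    linarith
  have h2 : ∫ x, f x ∂μ ≤ ∫ x, ctrans c2 Ω ψ x ∂μ := by
    refine integral_mono_ae (f.integrable μ)
      (integrable_of_continuousOn hΩc (ae_mem_of_probOn hμ)
        (continuous_ctrans_c2 hΩc hne hM').continuousOn) ?_
    filter_upwards [ae_mem_of_probOn hμ] with x hx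
    refine le_ctrans hne fun y hy => ?_
    have h3 := ctrans_le (huber_nonneg hlam y) hf hx
    rw [huber_comm] at h3
    have := huber_le_c2 lam x y
    linarith
  have := hφ.2 ψ hlip
  linarith

/-- Complementary slackness: `φ^{c₂} ⊕ φ` equals the Huber cost almost everywhere for the
optimal plan. -/
lemma ae_contact (hΩc : IsCompact Ω) (hΩconv : Convex ℝ Ω) (hne : Ω.Nonempty)
    (hμ : ProbOn Ω μ) (hν : ProbOn Ω ν) {lam : ℝ} (hlam : 0 < lam)
    {γ₀ : Measure (Ed d × Ed d)} (hγ : IsOptimalPlan (huber lam) μ ν γ₀)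
    {φ : Ed d → ℝ} (hφ : DualSol Ω lam μ ν φ) :
    ∀ᵐ p ∂γ₀, ctrans c2 Ω φ p.1 + φ p.2 = huber lam p.1 p.2 := by
  have := hμ.1
  have := hν.1
  obtain ⟨M, hM⟩ := hΩc.exists_bound_of_continuousOn hφ.1.continuousOn
  have hM' : ∀ y ∈ Ω, φ y ≤ M := fun y hy => (le_abs_self _).trans (hM y hy)
  have hfst : ∀ᵐ p ∂γ₀, p.1 ∈ Ω := by
    refine ae_of_ae_map (f := Prod.fst) (p := fun x => x ∈ Ω) measurable_fst.aemeasurable ?_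
    rw [hγ.1.1]
    exact hμ.2
  have hsnd : ∀ᵐ p ∂γ₀, p.2 ∈ Ω := by
    refine ae_of_ae_map (f := Prod.snd) (p := fun x => x ∈ Ω) measurable_snd.aemeasurable ?_
    rw [hγ.1.2]
    exact hν.2
  have : IsFiniteMeasure γ₀ := by
    constructor
    have h := congrArg (fun m : Measure (Ed d) => m Set.univ) hγ.1.1
    simp only [Measure.map_apply measurable_fst MeasurableSet.univ, Set.preimage_univ] at h
    rw [h]
    exact measure_lt_top μ _
  have iH : Integrable (fun p : Ed d × Ed d => huber lam p.1 p.2) γ₀ :=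
    integrable_of_continuousOn (hΩc.prod hΩc) (by
      filter_upwards [hfst, hsnd] with p h1 h2 using ⟨h1, h2⟩) (continuous_huber lam).continuousOn
  have iφ : Integrable φ (γ₀.map Prod.snd) := by
    rw [hγ.1.2]
    exact integrable_of_continuousOn hΩc (ae_mem_of_probOn hν) hφ.1.continuousOn
  have iG : Integrable (ctrans c2 Ω φ) (γ₀.map Prod.fst) := by
    rw [hγ.1.1]
    exact integrable_of_continuousOn hΩc (ae_mem_of_probOn hμ)
      (continuous_ctrans_c2 hΩc hne hM').continuousOn
  have iφ' : Integrable (fun p : Ed d × Ed d => φ p.2) γ₀ := iφ.comp_measurable measurable_snd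
  have iG' : Integrable (fun p : Ed d × Ed d => ctrans c2 Ω φ p.1) γ₀ :=
    iG.comp_measurable measurable_fst
  have eφ : ∫ y, φ y ∂ν = ∫ p, φ p.2 ∂γ₀ := by
    conv_lhs => rw [← hγ.1.2]
    exact integral_map measurable_snd.aemeasurable iφ.1
  have eG : ∫ x, ctrans c2 Ω φ x ∂μ = ∫ p, ctrans c2 Ω φ p.1 ∂γ₀ := by
    conv_lhs => rw [← hγ.1.1]
    exact integral_map measurable_fst.aemeasurable iG.1
  have key := cost_le_dual hΩc hne hμ hν hlam hγ hφ
  rw [eφ, eG, ← integral_add iG' iφ'] at key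
  have hle : (fun p : Ed d × Ed d => ctrans c2 Ω φ p.1 + φ p.2) ≤ᵐ[γ₀]
      (fun p => huber lam p.1 p.2) := by
    filter_upwards [hfst, hsnd] with p h1 h2
    exact ctrans_c2_add_le_huber hΩconv hlam hφ.1 hM' h1 h2
  exact (integral_eq_iff_of_ae_le (iG'.add iφ') iH hle).1
    (le_antisymm (integral_mono_ae (iG'.add iφ') iH hle) key)

end

/-- `ρ_λ^a` is dominated by `ν`. With `Ω ⊂ ℝ^d` compact convex with
non-negligible interior, `μ,ν ∈ 𝒫(Ω)`, `μ ≪ Lebesgue`, `λ > 0`, `γ₀` an optimal plan for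
the Huber cost, `μ^a = (π_x)_# γ₀|_{{|x-y| ≤ λ}}`, and `T_λ` a Borel map μ-a.e. equal to
`I - ∇φ_λ^{c₂}` for `φ_λ` a solution of the `λ`-Lipschitz dual problem: the measure
`ρ_λ^a = (T_λ)_# μ^a` satisfies `ρ_λ^a(E) ≤ ν(E)` for every Borel `E`; in particular if
`ν ≪ Lebesgue` then `ρ_λ^a ≪ Lebesgue`. -/
theorem stmt14 (d : ℕ) (Ω : Set (Ed d)) (hΩc : IsCompact Ω) (hΩconv : Convex ℝ Ω)
    (hΩint : volume (interior Ω) ≠ 0)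
    (μ ν : Measure (Ed d)) (hμ : ProbOn Ω μ) (hν : ProbOn Ω ν)
    (hμac : μ ≪ (volume : Measure (Ed d)))
    (lam : ℝ) (hlam : 0 < lam)
    (γ₀ : Measure (Ed d × Ed d)) (hγ : IsOptimalPlan (huber lam) μ ν γ₀)
    (φlam : Ed d → ℝ) (hφ : DualSol Ω lam μ ν φlam)
    (Tlam : Ed d → Ed d) (hTm : Measurable Tlam)
    (hT : ∀ᵐ x ∂μ, Tlam x = x - gradient (ctrans c2 Ω φlam) x) :
    (∀ E : Set (Ed d), MeasurableSet E →
      (((γ₀.restrict {p : Ed d × Ed d | ‖p.1 - p.2‖ ≤ lam}).map Prod.fst).map Tlam) E ≤ ν E) ∧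
    (ν ≪ (volume : Measure (Ed d)) →
      ((γ₀.restrict {p : Ed d × Ed d | ‖p.1 - p.2‖ ≤ lam}).map Prod.fst).map Tlam
        ≪ (volume : Measure (Ed d))) := by
  have hne : Ω.Nonempty := by
    by_contra h
    rw [Set.not_nonempty_iff_eq_empty] at h
    simp [h] at hΩint
  obtain ⟨M, hM⟩ := hΩc.exists_bound_of_continuousOn hφ.1.continuousOn
  have hM' : ∀ y ∈ Ω, φlam y ≤ M := fun y hy => (le_abs_self _).trans (hM y hy)
  have hS : MeasurableSet {p : Ed d × Ed d | ‖p.1 - p.2‖ ≤ lam} :=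
    measurableSet_le (by fun_prop) (by fun_prop)
  have hsnd : ∀ᵐ p ∂γ₀, p.2 ∈ Ω := by
    refine ae_of_ae_map (f := Prod.snd) (p := fun x => x ∈ Ω) measurable_snd.aemeasurable ?_
    rw [hγ.1.2]
    exact hν.2
  have hfst : ∀ᵐ p ∂γ₀, DifferentiableAt ℝ (ctrans c2 Ω φlam) p.1 ∧
      Tlam p.1 = p.1 - gradient (ctrans c2 Ω φlam) p.1 := by
    refine ae_of_ae_map (f := Prod.fst) (p := fun x => DifferentiableAt ℝ (ctrans c2 Ω φlam) x ∧
      Tlam x = x - gradient (ctrans c2 Ω φlam) x) measurable_fst.aemeasurable ?_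
    rw [hγ.1.1]
    filter_upwards [hμac.ae_le (ae_differentiableAt_ctrans_c2 hΩc hne hM'), hT] with x h1 h2
    exact ⟨h1, h2⟩
  -- On the region where the plan moves mass by at most `lam`, it is carried by the graph of `Tlam`.
  have hgraph : (fun p : Ed d × Ed d => Tlam p.1)
      =ᵐ[γ₀.restrict {p : Ed d × Ed d | ‖p.1 - p.2‖ ≤ lam}] Prod.snd := by
    refine (ae_restrict_iff' hS).2 ?_
    filter_upwards [hsnd, hfst, ae_contact hΩc hΩconv hne hμ hν hlam hγ hφ] with p h2 h1 hc hp
    have heq : ctrans c2 Ω φlam p.1 + φlam p.2 = c2 p.1 p.2 := by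
      rw [hc, huber, if_pos hp, c2]
    rw [h1.2, gradient_ctrans_c2 hM' h2 heq h1.1]
    abel
  have hmap : ((γ₀.restrict {p : Ed d × Ed d | ‖p.1 - p.2‖ ≤ lam}).map Prod.fst).map Tlam ≤ ν := by
    rw [Measure.map_map hTm measurable_fst]
    calc (γ₀.restrict {p : Ed d × Ed d | ‖p.1 - p.2‖ ≤ lam}).map (Tlam ∘ Prod.fst)
        = (γ₀.restrict {p : Ed d × Ed d | ‖p.1 - p.2‖ ≤ lam}).map Prod.snd :=
          Measure.map_congr hgraph
      _ ≤ γ₀.map Prod.snd := Measure.map_mono Measure.restrict_le_self measurable_snd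
      _ = ν := hγ.1.2
  exact ⟨fun E _ => hmap E, fun h => (Measure.absolutelyContinuous_of_le hmap).trans h⟩
end
end
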